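/- arXiv:2502.08809 — 2 statements merged into one kernel-verified Lean document; each statement's English description precedes it below -/
import Mathlib

section
/- Suppose condition (C) holds. If Ω ⊆ E_k is open and Φ : Ω → A is locally bounded in Ω and differentiable in the sense of Gâteaux at every point of Ω, then Φ is continuous in Ω. -/
open Filter Topology

/-- Local boundedness of `Φ` on `Ω`: every point of `Ω` has a neighborhood in `Ω`
on which `Φ` is bounded. -/
def IsLocBoundedOn {A : Type*} [NormedCommRing A] [NormedAlgebra ℂ A]
    {E : Submodule ℝ A} (Ω : Set E) (Φ : E → A) : Prop :=
  ∀ ζ ∈ Ω, ∃ r > (0 : ℝ), ∃ C : ℝ, ∀ z ∈ Ω, ‖z - ζ‖ < r → ‖Φ z‖ ≤ C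

/-- Differentiability in the sense of Gâteaux at `ζ` with Gâteaux derivative `g`:
for every `h ∈ E`, `(Φ(ζ + δ h) - Φ(ζ))/δ → h * g` as the real `δ → 0⁺`. -/
def GateauxDiffAt {A : Type*} [NormedCommRing A] [NormedAlgebra ℂ A]
    {E : Submodule ℝ A} (Φ : E → A) (ζ : E) (g : A) : Prop :=
  ∀ h : E, Tendsto (fun δ : ℝ => δ⁻¹ • (Φ (ζ + δ • h) - Φ ζ))
    (𝓝[>] (0 : ℝ)) (𝓝 ((h : A) * g))

/-- Differentiability in the sense of Lorch at `ζ` (relative to `Ω`) with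
Lorch derivative `L`. -/
def LorchDiffAt {A : Type*} [NormedCommRing A] [NormedAlgebra ℂ A]
    {E : Submodule ℝ A} (Ω : Set E) (Φ : E → A) (ζ : E) (L : A) : Prop :=
  ∀ ε > (0 : ℝ), ∃ δ > (0 : ℝ), ∀ h : E, ‖h‖ < δ → ζ + h ∈ Ω →
    ‖Φ (ζ + h) - Φ ζ - (h : A) * L‖ ≤ ε * ‖h‖

/-- Condition (C): every character of `A` maps `E` onto all of `ℂ`. -/
def CondC {A : Type*} [NormedCommRing A] [NormedAlgebra ℂ A]
    (E : Submodule ℝ A) : Prop :=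
  ∀ φ : A →ₐ[ℂ] ℂ, Function.Surjective fun x : E => φ (x : A)

/-!
If `f` is Gâteaux differentiable on a plane, then by Baire's theorem the points at which `f` is
Lipschitz, with fixed constant and scale, along finitely many given directions are dense in some
relatively open piece of the closed set `Z` of points near which Fréchet differentiability fails.
Crossing horizontal and vertical lines shows that `f` is Lipschitz on this piece of `Z`. Off `Z` a
Cauchy-type gradient estimate is available; applied on balls touching `Z`, it transfers an
oscillation bound from each scale to half of it, so that `f` is Lipschitz across `Z`. A Lipschitz
Gâteaux differentiable function on a finite-dimensional space is Fréchet differentiable, so `Z` is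
empty, and the gradient estimate holds for all bounded Gâteaux differentiable `f`.

The gradient estimate comes from condition (C): since `A` has finitely many characters, (C)
provides a real-linear `T : ℂ → E` taking nonzero numbers to invertible elements. Cauchy's formula
holds for `T`, with `2πi` replaced by the integral of `T(dz) / T z` over the unit circle. This
integral is invertible: a character `φ` maps it to the integral of `l(dz) / l z`, where `l = φ ∘ T`
is injective, and the imaginary part of the integrand never vanishes. On translates of the plane
the estimate bounds the Gâteaux derivative of `Φ` locally, so that `Φ` is locally Lipschitz.
-/

open Metric

section GateauxCalculus

variable {E F : Type*} [NormedAddCommGroup E] [NormedSpace ℝ E] [NormedAddCommGroup F]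
  [NormedSpace ℝ F] {f : E → F} {x y : E}

/-- Gâteaux differentiability with a continuous linear derivative: every line derivative at `x`
exists, and they assemble to `f'`. -/
def HasGateauxDerivAt (f : E → F) (f' : E →L[ℝ] F) (x : E) : Prop :=
  ∀ v, HasLineDerivAt ℝ f (f' v) x v

theorem HasGateauxDerivAt.hasDerivAt_comp_add_smul {f' : E →L[ℝ] F} {v : E} {t : ℝ}
    (hf : HasGateauxDerivAt f f' (x + t • v)) :
    HasDerivAt (fun s : ℝ ↦ f (x + s • v)) (f' v) t := by
  have h : HasDerivAt (fun s : ℝ ↦ f (x + t • v + s • v)) (f' v) (t - t) := by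
    simpa [HasLineDerivAt] using hf v
  simpa [add_assoc, ← add_smul] using h.comp_sub_const t t

theorem HasGateauxDerivAt.comp_const_add {G : Type*} [NormedAddCommGroup G] [NormedSpace ℝ G]
    {f' : E →L[ℝ] F} {S : G →L[ℝ] E} {z : G} (hf : HasGateauxDerivAt f f' (x + S z)) :
    HasGateauxDerivAt (fun z ↦ f (x + S z)) (f' ∘L S) z := fun v ↦ by
  simpa [HasLineDerivAt, add_assoc] using hf (S v)

theorem norm_image_sub_le_of_norm_gateauxDeriv_le {f' : E → E →L[ℝ] F} {s : Set E} {C : ℝ}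
    (hs : Convex ℝ s) (hf : ∀ p ∈ s, HasGateauxDerivAt f (f' p) p) (hC : ∀ p ∈ s, ‖f' p‖ ≤ C)
    (hx : x ∈ s) (hy : y ∈ s) : ‖f y - f x‖ ≤ C * ‖y - x‖ := by
  have hmem : ∀ t ∈ Set.Icc (0 : ℝ) 1, x + t • (y - x) ∈ s := fun t ht ↦
    hs.add_smul_sub_mem hx hy ht
  simpa using norm_image_sub_le_of_norm_deriv_le_segment_01'
    (fun t ht ↦ (hf _ (hmem t ht)).hasDerivAt_comp_add_smul.hasDerivWithinAt)
    (fun t ht ↦ (f' _).le_of_opNorm_le (hC _ (hmem t (Set.Ico_subset_Icc_self ht))) (y - x))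

theorem HasGateauxDerivAt.opNorm_le {f' : E →L[ℝ] F} {C : ℝ} (hf : HasGateauxDerivAt f f' x)
    (hC₀ : 0 ≤ C) (hC : ∀ᶠ y in 𝓝 x, ‖f y - f x‖ ≤ C * ‖y - x‖) : ‖f'‖ ≤ C :=
  f'.opNorm_le_bound hC₀ fun v ↦ (hf v).le_of_lip' hC₀ hC

theorem exists_finite_subset_sphere_dense (E : Type*) [NormedAddCommGroup E] [ProperSpace E]
    {η : ℝ} (hη : 0 < η) :
    ∃ D ⊆ sphere (0 : E) 1, D.Finite ∧ ∀ v ∈ sphere (0 : E) 1, ∃ q ∈ D, ‖v - q‖ < η := by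
  obtain ⟨D, hD, hfin, hcover⟩ := (isCompact_sphere (0 : E) 1).finite_cover_balls hη
  refine ⟨D, hD, hfin, fun v hv ↦ ?_⟩
  simpa [dist_eq_norm] using hcover hv

theorem HasGateauxDerivAt.hasFDerivAt [ProperSpace E] {f' : E →L[ℝ] F} {s : Set E} {K : NNReal}
    (hf : HasGateauxDerivAt f f' x) (hs : s ∈ 𝓝 x) (hK : LipschitzOnWith K f s) :
    HasFDerivAt f f' x := by
  rw [hasFDerivAt_iff_isLittleO_nhds_zero, Asymptotics.isLittleO_iff]
  intro ε hε
  obtain ⟨δ, hδ, hδε⟩ : ∃ δ > 0, (K + ‖f'‖ + 1) * δ = ε :=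
    ⟨ε / (K + ‖f'‖ + 1), by positivity, mul_div_cancel₀ ε (by positivity)⟩
  obtain ⟨D, hD, hfin, hdense⟩ := exists_finite_subset_sphere_dense E hδ
  have hline : ∀ᶠ t in 𝓝 (0 : ℝ), ∀ q ∈ D, ‖f (x + t • q) - f x - t • f' q‖ ≤ δ * ‖t‖ :=
    hfin.eventually_all.2 fun q _ ↦ (hasLineDerivAt_iff_isLittleO_nhds_zero.1 (hf q)).def hδ
  obtain ⟨r, hr, hball⟩ := Metric.mem_nhds_iff.1 hs
  have hnorm : Tendsto (fun v : E ↦ ‖v‖) (𝓝 0) (𝓝 0) :=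
    continuous_norm.tendsto' _ _ norm_zero
  filter_upwards [hnorm.eventually hline, Metric.ball_mem_nhds (0 : E) hr] with v hv hvr
  rcases eq_or_ne v 0 with rfl | hv0
  · simp
  set t := ‖v‖
  have ht : 0 < t := norm_pos_iff.2 hv0
  obtain ⟨q, hq, hqv⟩ := hdense (t⁻¹ • v) (by simp [norm_smul, t, hv0])
  have hvq : ‖v - t • q‖ ≤ t * δ := by
    have : v - t • q = t • (t⁻¹ • v - q) := by rw [smul_sub, smul_inv_smul₀ ht.ne']
    rw [this, norm_smul, norm_norm]
    gcongr
  have hsv : x + v ∈ s := hball (by simpa using hvr)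
  have hsq : x + t • q ∈ s := hball <| by
    simpa [norm_smul, t, mem_sphere_zero_iff_norm.1 (hD hq)] using hvr
  calc ‖f (x + v) - f x - f' v‖
      = ‖(f (x + v) - f (x + t • q)) - f' (v - t • q) + (f (x + t • q) - f x - t • f' q)‖ := by
        rw [map_sub, map_smul]; congr 1; abel
    _ ≤ ‖f (x + v) - f (x + t • q)‖ + ‖f' (v - t • q)‖ + ‖f (x + t • q) - f x - t • f' q‖ :=
        (norm_add_le _ _).trans (by gcongr; exact norm_sub_le _ _)
    _ ≤ K * ‖v - t • q‖ + ‖f'‖ * ‖v - t • q‖ + δ * t := by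
        gcongr
        · simpa using hK.norm_sub_le hsv hsq
        · exact f'.le_opNorm _
        · simpa [t] using hv q hq
    _ ≤ K * (t * δ) + ‖f'‖ * (t * δ) + δ * t := by gcongr
    _ = ε * t := by rw [← hδε]; ring

theorem exists_lipschitzOnWith_of_eventually_norm_gateauxDeriv_le {f' : E → E →L[ℝ] F} {C : ℝ}
    (hf : ∀ᶠ p in 𝓝 x, HasGateauxDerivAt f (f' p) p) (hC : ∀ᶠ p in 𝓝 x, ‖f' p‖ ≤ C) :
    ∃ K, ∃ s ∈ 𝓝 x, IsOpen s ∧ LipschitzOnWith K f s := by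
  obtain ⟨r, hr, hball⟩ := Metric.eventually_nhds_iff_ball.1 (hf.and hC)
  refine ⟨C.toNNReal, ball x r, ball_mem_nhds x hr, isOpen_ball,
    LipschitzOnWith.of_dist_le_mul fun p hp q hq ↦ ?_⟩
  rw [dist_eq_norm, dist_eq_norm]
  exact (norm_image_sub_le_of_norm_gateauxDeriv_le (convex_ball x r) (fun p hp ↦ (hball p hp).1)
    (fun p hp ↦ (hball p hp).2) hq hp).trans (by gcongr; exact Real.le_coe_toNNReal C)

theorem eventually_hasFDerivAt_of_eventually_norm_gateauxDeriv_le [ProperSpace E]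
    {f' : E → E →L[ℝ] F} {C : ℝ} (hf : ∀ᶠ p in 𝓝 x, HasGateauxDerivAt f (f' p) p)
    (hC : ∀ᶠ p in 𝓝 x, ‖f' p‖ ≤ C) : ∀ᶠ p in 𝓝 x, HasFDerivAt f (f' p) p := by
  obtain ⟨K, s, hs, hso, hK⟩ := exists_lipschitzOnWith_of_eventually_norm_gateauxDeriv_le hf hC
  filter_upwards [hf, hs] with p hp hps using hp.hasFDerivAt (hso.mem_nhds hps) hK

end GateauxCalculus

section Baire

theorem exists_nhds_inter_subset_closure_of_isLocallyClosed {X : Type*} [TopologicalSpace X]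
    [LocallyCompactSpace X] [T2Space X] {Z : Set X} (hZ : IsLocallyClosed Z) (hne : Z.Nonempty)
    {S : ℕ → Set X} (hS : Z ⊆ ⋃ n, S n) :
    ∃ n, ∃ x ∈ Z, ∃ V ∈ 𝓝 x, Z ∩ V ⊆ closure (S n) := by
  have := hZ.locallyCompactSpace
  have := hne.to_subtype
  obtain ⟨n, x, hx⟩ := nonempty_interior_of_iUnion_of_closed (X := Z)
    (f := fun n ↦ Subtype.val ⁻¹' closure (S n))
    (fun n ↦ isClosed_closure.preimage continuous_subtype_val) <| by
      rw [← Set.preimage_iUnion, Set.eq_univ_iff_forall]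
      exact fun z ↦ Set.iUnion_mono (fun n ↦ subset_closure) (hS z.2)
  obtain ⟨V, hV, hVsub⟩ := mem_nhds_subtype _ _ _ |>.1 (mem_interior_iff_mem_nhds.1 hx)
  exact ⟨n, x, x.2, V, hV, fun z hz ↦ hVsub (a := ⟨z, hz.1⟩) hz.2⟩

end Baire

section Cross

variable {F : Type*} [NormedAddCommGroup F] {f : ℂ → F}
  {D : Set ℂ} {N N' η : ℝ} {z z' w : ℂ}

/-- The points at which `f` is Lipschitz with constant `N` along the segments of half-length `N⁻¹`
in the directions `D`. The same `N` serves as constant and as inverse scale, so that the set grows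
with `N`. -/
def lineLipschitzSet (f : ℂ → F) (D : Set ℂ) (N : ℝ) : Set ℂ :=
  {z | ∀ q ∈ D, ∀ t : ℝ, |t| ≤ N⁻¹ → ‖f (z + t • q) - f z‖ ≤ N * |t|}

theorem lineLipschitzSet_mono (hN : 0 < N) (hNN' : N ≤ N') :
    lineLipschitzSet f D N ⊆ lineLipschitzSet f D N' := fun _ hz q hq t ht ↦
  (hz q hq t (ht.trans (inv_anti₀ hN hNN'))).trans (by gcongr)

theorem norm_sub_le_of_mem_lineLipschitzSet (h1 : 1 ∈ D) (hI : Complex.I ∈ D)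
    (hz : z ∈ lineLipschitzSet f D N) (hz' : z' ∈ lineLipschitzSet f D N) (hN : 0 ≤ N)
    (hd : ‖z - z'‖ ≤ N⁻¹) : ‖f z - f z'‖ ≤ 2 * N * ‖z - z'‖ := by
  have hre : |z'.re - z.re| ≤ ‖z - z'‖ := by
    simpa [norm_sub_rev] using Complex.abs_re_le_norm (z' - z)
  have him : |z.im - z'.im| ≤ ‖z - z'‖ := by simpa using Complex.abs_im_le_norm (z - z')
  have hcorner : z + (z'.re - z.re) • (1 : ℂ) = z' + (z.im - z'.im) • Complex.I := by
    apply Complex.ext <;> simp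
  have hfz := hz 1 h1 _ (hre.trans hd)
  have hfz' := hz' Complex.I hI _ (him.trans hd)
  rw [hcorner, norm_sub_rev] at hfz
  calc ‖f z - f z'‖ ≤ N * |z'.re - z.re| + N * |z.im - z'.im| :=
        (norm_sub_le_norm_sub_add_norm_sub _ _ _).trans (add_le_add hfz hfz')
    _ ≤ N * ‖z - z'‖ + N * ‖z - z'‖ := by gcongr
    _ = 2 * N * ‖z - z'‖ := by ring

variable [NormedSpace ℝ F] {f' : ℂ →L[ℝ] F}

theorem HasGateauxDerivAt.eventually_mem_lineLipschitzSet (hf : HasGateauxDerivAt f f' z)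
    (hD : D.Finite) : ∀ᶠ N in atTop, z ∈ lineLipschitzSet f D N := by
  refine hD.eventually_all.2 fun q _ ↦ ?_
  obtain ⟨C, hC⟩ := (hf q).isBigO_sub.bound
  obtain ⟨δ, hδ, hball⟩ := Metric.eventually_nhds_iff.1 hC
  filter_upwards [eventually_ge_atTop C, eventually_gt_atTop δ⁻¹] with N hCN hN t ht
  have htδ : dist t 0 < δ := by
    rw [Real.dist_0_eq_abs]
    exact ht.trans_lt (inv_lt_of_inv_lt₀ hδ hN)
  have : ‖f (z + t • q) - f z‖ ≤ C * |t| := by simpa using hball htδ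
  exact this.trans (by gcongr)

theorem HasGateauxDerivAt.continuousWithinAt_lineLipschitzSet (h1 : 1 ∈ D) (hI : Complex.I ∈ D)
    (hD : D.Finite) (hf : HasGateauxDerivAt f f' z) (hN : 0 < N) :
    ContinuousWithinAt f (lineLipschitzSet f D N) z := by
  obtain ⟨N', hz, hNN'⟩ :=
    ((hf.eventually_mem_lineLipschitzSet hD).and (eventually_ge_atTop N)).exists
  have hN' := hN.trans_le hNN'
  have hlim : Tendsto (fun p ↦ 2 * N' * ‖p - z‖) (𝓝 z) (𝓝 0) :=
    Continuous.tendsto' (by fun_prop) _ _ (by simp)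
  refine tendsto_iff_norm_sub_tendsto_zero.2 (squeeze_zero' (.of_forall fun _ ↦ norm_nonneg _) ?_
    (hlim.mono_left nhdsWithin_le_nhds))
  filter_upwards [self_mem_nhdsWithin, nhdsWithin_le_nhds (closedBall_mem_nhds z (inv_pos.2 hN'))]
    with p hp hpz
  exact norm_sub_le_of_mem_lineLipschitzSet h1 hI (lineLipschitzSet_mono hN hNN' hp) hz hN'.le
    (mem_closedBall_iff_norm.1 hpz)

theorem norm_sub_le_of_mem_closure_lineLipschitzSet {f'' : ℂ →L[ℝ] F} (h1 : 1 ∈ D)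
    (hI : Complex.I ∈ D) (hD : D.Finite) (hN : 0 < N) (hf : HasGateauxDerivAt f f' z)
    (hf' : HasGateauxDerivAt f f'' z') (hz : z ∈ closure (lineLipschitzSet f D N))
    (hz' : z' ∈ closure (lineLipschitzSet f D N)) (hd : ‖z - z'‖ < N⁻¹) :
    ‖f z - f z'‖ ≤ 2 * N * ‖z - z'‖ := by
  rw [mem_closure_iff_nhdsWithin_neBot] at hz hz'
  set S := lineLipschitzSet f D N
  have hsub : Tendsto (fun p : ℂ × ℂ ↦ ‖p.1 - p.2‖) (𝓝[S] z ×ˢ 𝓝[S] z') (𝓝 ‖z - z'‖) :=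
    ((tendsto_fst.mono_right nhdsWithin_le_nhds).sub
      (tendsto_snd.mono_right nhdsWithin_le_nhds)).norm
  have hfsub : Tendsto (fun p : ℂ × ℂ ↦ ‖f p.1 - f p.2‖) (𝓝[S] z ×ˢ 𝓝[S] z')
      (𝓝 ‖f z - f z'‖) :=
    (((hf.continuousWithinAt_lineLipschitzSet h1 hI hD hN).tendsto.comp tendsto_fst).sub
      ((hf'.continuousWithinAt_lineLipschitzSet h1 hI hD hN).tendsto.comp tendsto_snd)).norm
  refine le_of_tendsto_of_tendsto hfsub (hsub.const_mul (2 * N)) ?_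
  filter_upwards [hsub.eventually_lt_const hd, tendsto_fst.eventually self_mem_nhdsWithin,
    tendsto_snd.eventually self_mem_nhdsWithin] with p hp hp₁ hp₂
  exact norm_sub_le_of_mem_lineLipschitzSet h1 hI hp₁ hp₂ hN.le hp.le

theorem exists_norm_sub_le_of_mem_closure_lineLipschitzSet (h1 : 1 ∈ D) (hI : Complex.I ∈ D)
    (hD : D.Finite) (hN : 0 < N) (hη : 0 < η)
    (hdense : ∀ v ∈ sphere (0 : ℂ) 1, ∃ q ∈ D, ‖v - q‖ ≤ η)
    (hf : HasGateauxDerivAt f f' z) (hz : z ∈ closure (lineLipschitzSet f D N))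
    (hw : ‖w - z‖ ≤ N⁻¹) :
    ∃ p, ‖p - w‖ ≤ 2 * η * ‖w - z‖ ∧ ‖f p - f z‖ ≤ 2 * N * ‖w - z‖ := by
  rcases eq_or_ne w z with rfl | hwz
  · exact ⟨w, by simp⟩
  set t := ‖w - z‖
  have ht : 0 < t := norm_pos_iff.2 (sub_ne_zero.2 hwz)
  have := mem_closure_iff_nhdsWithin_neBot.1 hz
  obtain ⟨z', hz'S, hz'z, hfz'⟩ : ∃ z' ∈ lineLipschitzSet f D N, ‖z' - z‖ < η * t ∧
      ‖f z' - f z‖ < N * t := by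
    have hfz := (hf.continuousWithinAt_lineLipschitzSet h1 hI hD hN).eventually
      (ball_mem_nhds (f z) (mul_pos hN ht))
    have hball := eventually_nhdsWithin_of_eventually_nhds (s := lineLipschitzSet f D N)
      (ball_mem_nhds z (mul_pos hη ht))
    obtain ⟨z', ⟨hfz', hz'⟩, hz'S⟩ := ((hfz.and hball).and eventually_mem_nhdsWithin).exists
    exact ⟨z', hz'S, mem_ball_iff_norm.1 hz', mem_ball_iff_norm.1 hfz'⟩
  obtain ⟨q, hq, hqw⟩ := hdense (t⁻¹ • (w - z)) (by simp [t, sub_ne_zero.2 hwz])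
  have hqt : ‖t • q - (w - z)‖ ≤ t * η := by
    have : t • q - (w - z) = t • (q - t⁻¹ • (w - z)) := by rw [smul_sub, smul_inv_smul₀ ht.ne']
    rw [this, norm_smul, Real.norm_of_nonneg ht.le, norm_sub_rev]
    gcongr
  refine ⟨z' + t • q, ?_, ?_⟩
  · calc ‖z' + t • q - w‖ = ‖(z' - z) + (t • q - (w - z))‖ := by congr 1; abel
      _ ≤ η * t + t * η := norm_add_le_of_le hz'z.le hqt
      _ = 2 * η * t := by ring
  · have hline := hz'S q hq t (by rwa [abs_of_pos ht])
    rw [abs_of_pos ht] at hline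
    calc ‖f (z' + t • q) - f z‖ ≤ N * t + N * t :=
          (norm_sub_le_norm_sub_add_norm_sub _ _ _).trans (add_le_add hline hfz'.le)
      _ = 2 * N * t := by ring

end Cross

section Scales

variable {X Y : Type*} [MetricSpace X] [PseudoMetricSpace Y] {f : X → Y}
  {Z : Set X} {z₁ z w : X} {r K η B L M S t : ℝ}

/-- The interplay, inside `ball z₁ r`, of a closed set `Z` with a function `f`: `f` is Lipschitz on
`Z`; near each point of `Z` an `η`-dense set of points obeys the same Lipschitz bound; off `Z` an
oscillation bound on a ball improves to a Lipschitz bound on the concentric ball of half the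
radius. -/
structure IsLipschitzAcross (f : X → Y) (Z : Set X) (z₁ : X) (r K η B : ℝ) : Prop where
  dist_le : ∀ z ∈ Z ∩ ball z₁ r, ∀ w ∈ Z ∩ ball z₁ r, dist (f w) (f z) ≤ K * dist w z
  exists_dist_le : ∀ z ∈ Z ∩ ball z₁ r, ∀ w ∈ ball z₁ r,
    ∃ p, dist p w ≤ η * dist w z ∧ dist (f p) (f z) ≤ K * dist w z
  dist_le_of_ball_subset : ∀ ⦃w d c S⦄, 0 < d → ball w d ⊆ ball z₁ r \ Z →
    (∀ p ∈ ball w d, dist (f p) c ≤ S) → ∀ p ∈ ball w (d / 2),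
      dist (f p) (f w) ≤ B * S / d * dist p w

namespace IsLipschitzAcross

theorem dist_le_of_oscillation (h : IsLipschitzAcross f Z z₁ r K η B) (hB : 0 ≤ B)
    (hη : η < 1 / 2) (hz : z ∈ Z ∩ ball z₁ r) (hzw : z ≠ w)
    (hball : ball w (dist w z) ⊆ ball z₁ r \ Z)
    (hS : ∀ p ∈ ball w (dist w z), dist (f p) (f z) ≤ S) :
    dist (f w) (f z) ≤ B * η * S + K * dist w z := by
  have hρ : 0 < dist w z := dist_pos.2 hzw.symm
  obtain ⟨p, hpw, hfp⟩ := h.exists_dist_le z hz w (hball (mem_ball_self hρ)).1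
  have hS₀ : 0 ≤ S := dist_nonneg.trans (hS w (mem_ball_self hρ))
  have hfpw : dist (f p) (f w) ≤ B * η * S := calc
    dist (f p) (f w) ≤ B * S / dist w z * dist p w :=
      h.dist_le_of_ball_subset hρ hball hS p (mem_ball.2 (by nlinarith))
    _ ≤ B * S / dist w z * (η * dist w z) := by gcongr
    _ = B * η * S := by field_simp
  exact (dist_triangle_left _ _ _).trans (add_le_add hfpw hfp)

variable [ProperSpace X]

theorem dist_le_half_scale (h : IsLipschitzAcross f Z z₁ r K η B) (hZ : IsClosed Z) (hK : 0 ≤ K)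
    (hB : 0 ≤ B) (hL : 6 * K ≤ L) (hη : η < 1 / 2) (hBη : 4 * B * η ≤ 1) (ht : 0 < t)
    (htr : 12 * t ≤ r)
    (hscale : ∀ z ∈ Z ∩ ball z₁ (r / 2 + 8 * t), ∀ w, dist w z ≤ 2 * t →
      dist (f w) (f z) ≤ L * (2 * t)) :
    ∀ z ∈ Z ∩ ball z₁ (r / 2 + 4 * t), ∀ w, dist w z ≤ t → dist (f w) (f z) ≤ L * t := by
  rintro z ⟨hzZ, hz⟩ w hwz
  have hzr : z ∈ Z ∩ ball z₁ r := ⟨hzZ, ball_subset_ball (by linarith) hz⟩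
  rw [mem_ball] at hz
  obtain ⟨z₂, hz₂Z, hz₂⟩ := hZ.exists_infDist_eq_dist ⟨z, hzZ⟩ w
  have hρt : dist w z₂ ≤ t := (hz₂ ▸ infDist_le_dist_of_mem (x := w) hzZ).trans hwz
  have hz₂z : dist z₂ z ≤ 2 * t := by linarith [dist_triangle_left z₂ z w]
  have hz₂r : dist z₂ z₁ < r / 2 + 6 * t := by linarith [dist_triangle z₂ z z₁]
  have hz₂Zr : z₂ ∈ Z ∩ ball z₁ r := ⟨hz₂Z, mem_ball.2 (by linarith)⟩
  have hfz₂ : dist (f z₂) (f z) ≤ K * (2 * t) := (h.dist_le z hzr z₂ hz₂Zr).trans (by gcongr)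
  suffices hfw : dist (f w) (f z₂) ≤ L * t / 2 + K * t by
    nlinarith [dist_triangle (f w) (f z₂) (f z)]
  rcases eq_or_ne z₂ w with rfl | hne
  · rw [dist_self]
    nlinarith
  have hball : ball w (dist w z₂) ⊆ ball z₁ r \ Z := fun q hq ↦ by
    rw [mem_ball] at hq
    refine ⟨mem_ball.2 (by linarith [dist_triangle4 q w z z₁]), fun hqZ ↦ ?_⟩
    linarith [dist_comm w q, infDist_le_dist_of_mem (x := w) hqZ]
  have hosc : ∀ q ∈ ball w (dist w z₂), dist (f q) (f z₂) ≤ L * (2 * t) := fun q hq ↦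
    hscale z₂ ⟨hz₂Z, mem_ball.2 (by linarith)⟩ q (by linarith [dist_triangle q w z₂, mem_ball.1 hq])
  calc dist (f w) (f z₂) ≤ B * η * (L * (2 * t)) + K * dist w z₂ :=
        h.dist_le_of_oscillation hB hη hz₂Zr hne hball hosc
    _ = 4 * B * η * (L * t / 2) + K * dist w z₂ := by ring
    _ ≤ L * t / 2 + K * t := by
        gcongr
        exact mul_le_of_le_one_left (by nlinarith) hBη

theorem dist_le_dyadic_scale (h : IsLipschitzAcross f Z z₁ r K η B) (hZ : IsClosed Z) (hK : 0 ≤ K)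
    (hB : 0 ≤ B) (hL : 6 * K ≤ L) (hη : η < 1 / 2) (hBη : 4 * B * η ≤ 1) (ht : 0 < t)
    (htr : 16 * t ≤ r)
    (hM : ∀ w ∈ ball z₁ r, ∀ z ∈ ball z₁ r, dist (f w) (f z) ≤ L * t) (j : ℕ) :
    ∀ z ∈ Z ∩ ball z₁ (r / 2 + 4 * (t * (1 / 2) ^ j)), ∀ w, dist w z ≤ t * (1 / 2) ^ j →
      dist (f w) (f z) ≤ L * (t * (1 / 2) ^ j) := by
  induction j with
  | zero =>
    rintro z ⟨-, hz⟩ w hwz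
    rw [pow_zero, mul_one] at *
    rw [mem_ball] at hz
    exact hM w (mem_ball.2 (by linarith [dist_triangle w z z₁])) z (mem_ball.2 (by linarith))
  | succ j ih =>
    set s := t * (1 / 2) ^ (j + 1) with hs
    have h2s : t * (1 / 2) ^ j = 2 * s := by rw [hs, pow_succ]; ring
    have hst : s ≤ t := mul_le_of_le_one_right ht.le (pow_le_one₀ (by norm_num) (by norm_num))
    rw [h2s, ← mul_assoc, show (4 : ℝ) * 2 = 8 by norm_num] at ih
    exact h.dist_le_half_scale hZ hK hB hL hη hBη (by positivity) (by linarith) ih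

theorem exists_dist_le_mul_dist (h : IsLipschitzAcross f Z z₁ r K η B) (hZ : IsClosed Z)
    (hK : 0 ≤ K) (hB : 0 ≤ B) (hr : 0 < r) (hη : η < 1 / 2) (hBη : 4 * B * η ≤ 1)
    (hM : ∀ w ∈ ball z₁ r, ∀ z ∈ ball z₁ r, dist (f w) (f z) ≤ M) :
    ∃ L ≥ 0, ∀ z ∈ Z ∩ ball z₁ (r / 16), ∀ w ∈ ball z (r / 16),
      dist (f w) (f z) ≤ L * dist w z := by
  obtain ⟨L, hLK, hLM⟩ : ∃ L, 6 * K ≤ L ∧ M / (r / 16) ≤ L :=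
    ⟨_, le_max_left _ _, le_max_right _ _⟩
  refine ⟨2 * L, by linarith, fun z hz w hwz ↦ ?_⟩
  rcases eq_or_ne w z with rfl | hne
  · simp
  have hpos := dist_pos.2 hne
  obtain ⟨j, hj, hj'⟩ := exists_nat_pow_near_of_lt_one (x := dist w z / (r / 16)) (y := (1 / 2 : ℝ))
    (by positivity) ((div_le_one (by positivity)).2 (mem_ball.1 hwz).le) (by norm_num) (by norm_num)
  rw [lt_div_iff₀ (by positivity), pow_succ] at hj
  rw [div_le_iff₀ (by positivity), mul_comm] at hj'
  have hbound := h.dist_le_dyadic_scale hZ hK hB hLK hη hBη (by positivity) (by linarith)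
    (fun w hw z hz ↦ (hM w hw z hz).trans ((div_le_iff₀ (by positivity)).1 hLM)) j z
    ⟨hz.1, ball_subset_ball (by linarith) hz.2⟩ w hj'
  exact hbound.trans (by nlinarith)

end IsLipschitzAcross

end Scales

section GradientEstimate

variable {E F : Type*} [NormedAddCommGroup E] [NormedSpace ℝ E] [NormedAddCommGroup F]
  [NormedSpace ℝ F] {f : E → F} {f' : E → E →L[ℝ] F} {U Z : Set E} {w x p : E}
  {c : F} {B d L S δ : ℝ}

/-- The interior gradient estimate with constant `B` for `f` on `U`, at balls where `f` is Fréchet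
differentiable with derivative `f'`. -/
def HasGradientEstimate (f : E → F) (f' : E → E →L[ℝ] F) (U : Set E) (B : ℝ) : Prop :=
  ∀ ⦃w d c S⦄, 0 < d → ball w d ⊆ U → (∀ p ∈ ball w d, HasFDerivAt f (f' p) p) →
    (∀ p ∈ ball w d, ‖f p - c‖ ≤ S) → ‖f' w‖ ≤ B * S / d

theorem HasGradientEstimate.norm_sub_le (h : HasGradientEstimate f f' U B) (hd : 0 < d)
    (hU : ball w d ⊆ U) (hf : ∀ q ∈ ball w d, HasFDerivAt f (f' q) q)
    (hS : ∀ q ∈ ball w d, ‖f q - c‖ ≤ S) (hp : p ∈ ball w (d / 2)) :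
    ‖f p - f w‖ ≤ 2 * B * S / d * ‖p - w‖ := by
  have hsub : ∀ q ∈ ball w (d / 2), ball q (d / 2) ⊆ ball w d := fun q hq ↦
    ball_subset_ball' (by linarith [mem_ball.1 hq])
  refine (convex_ball w (d / 2)).norm_image_sub_le_of_norm_hasFDerivWithin_le
    (fun q hq ↦ (hf q (ball_subset_ball (by linarith) hq)).hasFDerivWithinAt) (fun q hq ↦ ?_)
    (mem_ball_self (by positivity)) hp
  calc ‖f' q‖ ≤ B * S / (d / 2) := h (by positivity) ((hsub q hq).trans hU)
        (fun u hu ↦ hf u (hsub q hq hu)) (fun u hu ↦ hS u (hsub q hq hu))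
    _ = 2 * B * S / d := by field_simp

theorem HasGradientEstimate.norm_le_of_norm_sub_le [ProperSpace E]
    (h : HasGradientEstimate f f' U B) (hB : 0 ≤ B)
    (hZ : IsClosed Z) (hx : x ∈ Z) (hL₀ : 0 ≤ L) (hU : ball x (2 * δ) ⊆ U)
    (hf : ∀ q ∈ ball x (2 * δ), HasGateauxDerivAt f (f' q) q)
    (hfZ : ∀ q ∈ ball x (2 * δ) \ Z, HasFDerivAt f (f' q) q)
    (hL : ∀ z ∈ Z ∩ ball x (2 * δ), ∀ w ∈ ball z (2 * δ), ‖f w - f z‖ ≤ L * ‖w - z‖)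
    (hp : p ∈ ball x δ) : ‖f' p‖ ≤ (2 * B + 1) * L := by
  rw [mem_ball] at hp
  have hδ : 0 < δ := dist_nonneg.trans_lt hp
  have hpx : p ∈ ball x (2 * δ) := mem_ball.2 (by linarith)
  by_cases hpZ : p ∈ Z
  · calc ‖f' p‖ ≤ L := (hf p hpx).opNorm_le hL₀ <| by
          filter_upwards [ball_mem_nhds p (show 0 < 2 * δ by positivity)] using hL p ⟨hpZ, hpx⟩
      _ ≤ (2 * B + 1) * L := by nlinarith [mul_nonneg hB hL₀]
  obtain ⟨z, hzZ, hz⟩ := hZ.exists_infDist_eq_dist ⟨x, hx⟩ p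
  have hpz : 0 < dist p z := dist_pos.2 fun h ↦ hpZ (h ▸ hzZ)
  have hpzδ : dist p z < δ := (hz ▸ infDist_le_dist_of_mem (x := p) hx).trans_lt hp
  have hzx : z ∈ ball x (2 * δ) := mem_ball.2 (by linarith [dist_triangle_left z x p])
  have hball : ball p (dist p z) ⊆ ball x (2 * δ) \ Z := fun q hq ↦ by
    rw [mem_ball] at hq
    refine ⟨mem_ball.2 (by linarith [dist_triangle q p x]), fun hqZ ↦ ?_⟩
    linarith [dist_comm p q, infDist_le_dist_of_mem (x := p) hqZ]
  have hosc : ∀ q ∈ ball p (dist p z), ‖f q - f z‖ ≤ L * (2 * dist p z) := fun q hq ↦ by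
    have hqz : dist q z ≤ 2 * dist p z := by linarith [dist_triangle q p z, mem_ball.1 hq]
    refine (hL z ⟨hzZ, hzx⟩ q (mem_ball.2 (by linarith))).trans ?_
    rw [← dist_eq_norm]
    gcongr
  calc ‖f' p‖ ≤ B * (L * (2 * dist p z)) / dist p z :=
        h hpz (fun q hq ↦ hU (hball hq).1) (fun q hq ↦ hfZ q (hball hq)) hosc
    _ = 2 * B * L := by field_simp
    _ ≤ (2 * B + 1) * L := by gcongr; linarith

end GradientEstimate

section Regularity

variable {F : Type*} [NormedAddCommGroup F] [NormedSpace ℝ F] {f : ℂ → F} {f' : ℂ → ℂ →L[ℝ] F}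
  {U Z D V : Set ℂ} {z₁ : ℂ} {B N r η : ℝ}

theorem isLipschitzAcross_of_subset_closure_lineLipschitzSet (h1 : 1 ∈ D) (hI : Complex.I ∈ D)
    (hD : D.Finite) (hN : 0 < N) (hη : 0 < η)
    (hdense : ∀ v ∈ sphere (0 : ℂ) 1, ∃ q ∈ D, ‖v - q‖ ≤ η)
    (hgrad : HasGradientEstimate f f' U B) (hr : r ≤ (2 * N)⁻¹) (hU : ball z₁ r ⊆ U)
    (hf : ∀ z ∈ ball z₁ r, HasGateauxDerivAt f (f' z) z)
    (hfZ : ∀ z ∈ ball z₁ r \ Z, HasFDerivAt f (f' z) z)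
    (hZ : Z ∩ ball z₁ r ⊆ closure (lineLipschitzSet f D N)) :
    IsLipschitzAcross f Z z₁ r (2 * N) (2 * η) (2 * B) := by
  have hdist : ∀ z ∈ ball z₁ r, ∀ w ∈ ball z₁ r, ‖w - z‖ < N⁻¹ := fun z hz w hw ↦ by
    have hrN : r + r ≤ N⁻¹ := by rw [mul_inv] at hr; linarith
    rw [← dist_eq_norm]
    linarith [dist_triangle_right w z z₁, mem_ball.1 hz, mem_ball.1 hw]
  refine ⟨fun z hz w hw ↦ ?_, fun z hz w hw ↦ ?_, fun w d c S hd hball hS p hp ↦ ?_⟩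
  · simpa only [dist_eq_norm] using norm_sub_le_of_mem_closure_lineLipschitzSet h1 hI hD hN
      (hf w hw.2) (hf z hz.2) (hZ hw) (hZ hz) (hdist z hz.2 w hw.2)
  · simpa only [dist_eq_norm] using exists_norm_sub_le_of_mem_closure_lineLipschitzSet h1 hI hD hN
      hη hdense (hf z hz.2) (hZ hz) (hdist z hz.2 w hw).le
  · simp only [dist_eq_norm] at hS ⊢
    exact hgrad.norm_sub_le hd (fun q hq ↦ hU (hball hq).1) (fun q hq ↦ hfZ q (hball hq)) hS hp

theorem exists_finite_directions {η : ℝ} (hη : 0 < η) :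
    ∃ D : Set ℂ, D.Finite ∧ 1 ∈ D ∧ Complex.I ∈ D ∧
      ∀ v ∈ sphere (0 : ℂ) 1, ∃ q ∈ D, ‖v - q‖ ≤ η := by
  obtain ⟨D, -, hfin, hdense⟩ := exists_finite_subset_sphere_dense ℂ hη
  refine ⟨insert 1 (insert Complex.I D), (hfin.insert _).insert _, by simp, by simp, fun v hv ↦ ?_⟩
  obtain ⟨q, hq, hvq⟩ := hdense v hv
  exact ⟨q, by simp [hq], hvq.le⟩

theorem exists_nhds_inter_subset_closure_lineLipschitzSet (hD : D.Finite) (hU : IsOpen U)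
    (hf : ∀ z ∈ U, HasGateauxDerivAt f (f' z) z) (hZ : IsClosed Z) (hne : (Z ∩ U).Nonempty) :
    ∃ N > 0, ∃ z ∈ Z ∩ U, ∃ V ∈ 𝓝 z, Z ∩ V ⊆ closure (lineLipschitzSet f D N) := by
  obtain ⟨n, z, hz, V, hV, hsub⟩ := exists_nhds_inter_subset_closure_of_isLocallyClosed
    (hZ.isLocallyClosed.inter hU.isLocallyClosed) hne
    (S := fun n : ℕ ↦ lineLipschitzSet f D (n + 1)) fun z hz ↦ by
      have hN : Tendsto (fun n : ℕ ↦ (n + 1 : ℝ)) atTop atTop :=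
        tendsto_atTop_add_const_right _ _ tendsto_natCast_atTop_atTop
      obtain ⟨n, hn⟩ := (hN.eventually ((hf z hz.2).eventually_mem_lineLipschitzSet hD)).exists
      exact Set.mem_iUnion.2 ⟨n, hn⟩
  exact ⟨n + 1, by positivity, z, hz, U ∩ V, inter_mem (hU.mem_nhds hz.2) hV,
    fun p hp ↦ hsub ⟨⟨hp.1, hp.2.1⟩, hp.2.2⟩⟩

theorem eventually_hasFDerivAt_of_subset_closure_lineLipschitzSet (h1 : 1 ∈ D)
    (hI : Complex.I ∈ D) (hD : D.Finite) (hN : 0 < N) (hη : 0 < η) (hη' : η < 1 / 4)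
    (hB : 0 ≤ B) (hBη : 16 * B * η ≤ 1)
    (hdense : ∀ v ∈ sphere (0 : ℂ) 1, ∃ q ∈ D, ‖v - q‖ ≤ η)
    (hgrad : HasGradientEstimate f f' U B) (hU : U ∈ 𝓝 z₁)
    (hf : ∀ z ∈ U, HasGateauxDerivAt f (f' z) z) {M : ℝ} (hM : ∀ᶠ z in 𝓝 z₁, ‖f z‖ ≤ M)
    (hZ : IsClosed Z) (hfZ : ∀ z ∉ Z, HasFDerivAt f (f' z) z) (hz₁ : z₁ ∈ Z) (hV : V ∈ 𝓝 z₁)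
    (hZV : Z ∩ V ⊆ closure (lineLipschitzSet f D N)) :
    ∀ᶠ z in 𝓝 z₁, HasFDerivAt f (f' z) z := by
  obtain ⟨r₀, hr₀, hball⟩ := Metric.eventually_nhds_iff_ball.1 (hM.and (inter_mem hU hV))
  obtain ⟨r, hr, hrN, hrr₀⟩ : ∃ r > 0, r ≤ (2 * N)⁻¹ ∧ r ≤ r₀ :=
    ⟨min (2 * N)⁻¹ r₀, by positivity, min_le_left _ _, min_le_right _ _⟩
  replace hball : ∀ z ∈ ball z₁ r, ‖f z‖ ≤ M ∧ z ∈ U ∩ V := fun z hz ↦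
    hball z (ball_subset_ball hrr₀ hz)
  have hacross : IsLipschitzAcross f Z z₁ r (2 * N) (2 * η) (2 * B) :=
    isLipschitzAcross_of_subset_closure_lineLipschitzSet h1 hI hD hN hη hdense hgrad hrN
      (fun z hz ↦ (hball z hz).2.1) (fun z hz ↦ hf z (hball z hz).2.1) (fun z hz ↦ hfZ z hz.2)
      (fun z hz ↦ hZV ⟨hz.1, (hball z hz.2).2.2⟩)
  obtain ⟨L, hL₀, hL⟩ := hacross.exists_dist_le_mul_dist (M := M + M) hZ (by positivity)
    (by positivity) hr (by linarith) (by linarith) fun w hw z hz ↦ by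
      rw [dist_eq_norm]
      exact norm_sub_le_of_le (hball w hw).1 (hball z hz).1
  have hr16 : ball z₁ (r / 16) ⊆ U := fun z hz ↦
    (hball z (ball_subset_ball (by linarith) hz)).2.1
  refine eventually_hasFDerivAt_of_eventually_norm_gateauxDeriv_le
    (mem_of_superset hU hf) ?_ (C := (2 * B + 1) * L)
  filter_upwards [ball_mem_nhds z₁ (show 0 < r / 32 by positivity)] with p hp
  have h2 : 2 * (r / 32) = r / 16 := by ring
  refine hgrad.norm_le_of_norm_sub_le hB hZ hz₁ hL₀ (δ := r / 32) ?_ ?_ (fun q hq ↦ hfZ q hq.2)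
    ?_ hp <;> rw [h2]
  · exact hr16
  · exact fun q hq ↦ hf q (hr16 hq)
  · simpa only [dist_eq_norm] using hL

theorem hasFDerivAt_of_hasGateauxDerivAt_of_hasGradientEstimate (hU : IsOpen U)
    (hf : ∀ z ∈ U, HasGateauxDerivAt f (f' z) z) (hM : ∀ z ∈ U, ∃ M, ∀ᶠ p in 𝓝 z, ‖f p‖ ≤ M)
    (hB : 0 ≤ B) (hgrad : HasGradientEstimate f f' U B) : ∀ z ∈ U, HasFDerivAt f (f' z) z := by
  set R := interior {z | HasFDerivAt f (f' z) z}
  have hfR : ∀ z ∈ R, HasFDerivAt f (f' z) z := fun z hz ↦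
    interior_subset (s := {z | HasFDerivAt f (f' z) z}) hz
  suffices hUR : U ⊆ R from fun z hz ↦ hfR z (hUR hz)
  by_contra hUR
  obtain ⟨η, hη, hη', hBη⟩ : ∃ η > 0, η < 1 / 4 ∧ 16 * B * η ≤ 1 := by
    refine ⟨1 / (16 * (B + 1)), by positivity, by gcongr; linarith, ?_⟩
    rw [mul_one_div, div_le_one (by positivity)]
    linarith
  obtain ⟨D, hD, h1, hI, hdense⟩ := exists_finite_directions hη
  have hZ : IsClosed Rᶜ := isOpen_interior.isClosed_compl
  obtain ⟨N, hN, z₁, ⟨hz₁, hz₁U⟩, V, hV, hsub⟩ :=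
    exists_nhds_inter_subset_closure_lineLipschitzSet hD hU hf hZ
      ((Set.not_subset.1 hUR).imp fun _ h ↦ ⟨h.2, h.1⟩)
  obtain ⟨M, hM⟩ := hM z₁ hz₁U
  refine hz₁ (mem_interior_iff_mem_nhds.2 ?_)
  exact eventually_hasFDerivAt_of_subset_closure_lineLipschitzSet h1 hI hD hN hη hη' hB hBη hdense
    hgrad (hU.mem_nhds hz₁U) hf hM hZ (fun z hz ↦ hfR z (Set.not_notMem.1 hz)) hz₁ hV hsub

end Regularity

section Divergence

variable {F : Type*} [NormedAddCommGroup F] [NormedSpace ℝ F]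

theorem integral_right_eq_integral_left_of_divergence_eq_zero {f g : ℝ × ℝ → F}
    {f' g' : ℝ × ℝ → ℝ × ℝ →L[ℝ] F} {a₁ a₂ b₁ b₂ : ℝ} (h₁ : a₁ ≤ b₁) (h₂ : a₂ ≤ b₂)
    (hf : ∀ p ∈ Set.Icc a₁ b₁ ×ˢ Set.Icc a₂ b₂, HasFDerivAt f (f' p) p)
    (hg : ∀ p ∈ Set.Icc a₁ b₁ ×ˢ Set.Icc a₂ b₂, HasFDerivAt g (g' p) p)
    (hdiv : ∀ p ∈ Set.Icc a₁ b₁ ×ˢ Set.Icc a₂ b₂, f' p (1, 0) + g' p (0, 1) = 0)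
    (hper : ∀ x ∈ Set.Icc a₁ b₁, g (x, a₂) = g (x, b₂)) :
    ∫ y in a₂..b₂, f (b₁, y) = ∫ y in a₂..b₂, f (a₁, y) := by
  rw [← Set.uIcc_of_le h₁, ← Set.uIcc_of_le h₂] at hf hg hdiv
  rw [← Set.uIcc_of_le h₁] at hper
  have hsub := Set.prod_mono (Set.Ioo_subset_Icc_self (a := min a₁ b₁) (b := max a₁ b₁))
    (Set.Ioo_subset_Icc_self (a := min a₂ b₂) (b := max a₂ b₂))
  have hstokes := MeasureTheory.integral2_divergence_prod_of_hasFDerivAt f g f' g' a₁ a₂ b₁ b₂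
    (fun p hp ↦ (hf p hp).continuousAt.continuousWithinAt)
    (fun p hp ↦ (hg p hp).continuousAt.continuousWithinAt)
    (fun p hp ↦ hf p (hsub hp)) (fun p hp ↦ hg p (hsub hp))
    ((MeasureTheory.integrableOn_congr_fun hdiv
      (measurableSet_uIcc.prod measurableSet_uIcc)).2 MeasureTheory.integrableOn_zero)
  have hzero : ∫ x in a₁..b₁, ∫ y in a₂..b₂, f' (x, y) (1, 0) + g' (x, y) (0, 1) = 0 := by
    refine (intervalIntegral.integral_congr fun x hx ↦ ?_).trans intervalIntegral.integral_zero
    exact (intervalIntegral.integral_congr fun y hy ↦ hdiv (x, y) ⟨hx, hy⟩).trans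
      intervalIntegral.integral_zero
  rw [hzero, intervalIntegral.integral_congr hper, sub_self, zero_add] at hstokes
  exact sub_eq_zero.1 hstokes.symm

end Divergence

theorem ringInverse_smul {K A : Type*} [Field K] [Ring A] [Algebra K A] (c : K) (x : A) :
    Ring.inverse (c • x) = c⁻¹ • Ring.inverse x := by
  rcases eq_or_ne c 0 with rfl | hc
  · simp
  by_cases hx : IsUnit x
  · have hcx : IsUnit (c • x) := hx.smul (Units.mk0 c hc)
    refine hcx.mul_left_cancel ?_
    rw [Ring.mul_inverse_cancel _ hcx, smul_mul_smul_comm, mul_inv_cancel₀ hc,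
      Ring.mul_inverse_cancel _ hx, one_smul]
  · have hcx : ¬IsUnit (c • x) := fun h ↦ hx <| by
      simpa [Units.smul_def, smul_smul, hc] using h.smul (Units.mk0 c hc)⁻¹
    rw [Ring.inverse_non_unit _ hx, Ring.inverse_non_unit _ hcx, smul_zero]

section Cauchy

variable {A : Type*} [NormedCommRing A] [NormedAlgebra ℂ A] {T : ℂ →L[ℝ] A}
  {a b f g : ℂ → A} {w : ℂ} {r r₁ r₂ d : ℝ}

theorem continuousOn_inverse_comp [CompleteSpace A] (hT : ∀ z ≠ 0, IsUnit (T z)) :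
    ContinuousOn (fun z ↦ Ring.inverse (T z)) {0}ᶜ := fun z hz ↦ by
  obtain ⟨u, hu⟩ := hT z hz
  have := (hasFDerivAt_ringInverse (𝕜 := ℝ) u).continuousAt
  rw [hu] at this
  exact (ContinuousAt.comp (f := T) this T.continuous.continuousAt).continuousWithinAt

theorem hasFDerivAt_inverse_sub [CompleteSpace A] {z : ℂ} (hz : IsUnit (T (z - w))) :
    HasFDerivAt (fun z ↦ Ring.inverse (T (z - w))) (-Ring.inverse (T (z - w)) ^ 2 • T) z := by
  obtain ⟨u, hu⟩ := hz
  have hinv := hasFDerivAt_ringInverse (𝕜 := ℝ) u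
  rw [hu] at hinv
  refine (hinv.comp z (T.hasFDerivAt.comp z ((hasFDerivAt_id z).sub_const w))).congr_fderiv ?_
  ext v
  simp [← hu, pow_two, mul_assoc, mul_comm]

/-- The integral of the 1-form `T(dz) * a z` over the circle of centre `w` and radius `r`. -/
noncomputable def mulCircleIntegral (T : ℂ →L[ℝ] A) (a : ℂ → A) (w : ℂ) (r : ℝ) : A :=
  ∫ θ in 0..2 * Real.pi, T (circleMap 0 r θ * Complex.I) * a (circleMap w r θ)

theorem norm_mulCircleIntegral_le {C : ℝ} (hr : 0 ≤ r) (ha : ∀ z ∈ sphere w r, ‖a z‖ ≤ C) :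
    ‖mulCircleIntegral T a w r‖ ≤ 2 * Real.pi * (‖T‖ * r * C) := by
  have hbound : ∀ θ : ℝ, ‖T (circleMap 0 r θ * Complex.I) * a (circleMap w r θ)‖ ≤ ‖T‖ * r * C := by
    intro θ
    refine (norm_mul_le _ _).trans ?_
    gcongr
    · simpa [abs_of_nonneg hr] using T.le_opNorm (circleMap 0 r θ * Complex.I)
    · exact ha _ (circleMap_mem_sphere w hr θ)
  have h := intervalIntegral.norm_integral_le_of_norm_le_const fun θ
    (_ : θ ∈ Set.uIoc 0 (2 * Real.pi)) ↦ hbound θ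
  rw [sub_zero, abs_of_pos Real.two_pi_pos] at h
  exact h.trans_eq (mul_comm _ _)

theorem mulCircleIntegral_eq_of_hasFDerivAt (h₁ : 0 < r₁) (h₂ : r₁ ≤ r₂)
    (ha : ∀ z, r₁ ≤ ‖z - w‖ → ‖z - w‖ ≤ r₂ → HasFDerivAt a (b z • T) z) :
    mulCircleIntegral T a w r₁ = mulCircleIntegral T a w r₂ := by
  let e : ℝ × ℝ →L[ℝ] ℂ := Complex.equivRealProdCLM.symm
  have he (p) : e p = p.1 + p.2 * Complex.I := Complex.equivRealProdCLM_symm_apply p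
  let q : ℝ × ℝ → ℂ := fun p ↦ Complex.exp (e p)
  have hq (p) : HasFDerivAt q (q p • e) p := e.hasFDerivAt.cexp
  have hq_norm (p) : ‖q p‖ = Real.exp p.1 := by simp [q, he, Complex.norm_exp]
  have hq_circle {r : ℝ} (hr : 0 < r) (θ : ℝ) : q (Real.log r, θ) = circleMap 0 r θ := by
    simp [q, he, circleMap, Complex.exp_add, ← Complex.ofReal_exp, Real.exp_log hr]
  have hderiv (c : ℂ) (p : ℝ × ℝ) (hp : p.1 ∈ Set.Icc (Real.log r₁) (Real.log r₂)) :
      HasFDerivAt (fun p ↦ T (q p * c) * a (w + q p))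
        (T (q p * c) • ((b (w + q p) • T) ∘L (q p • e)) +
          a (w + q p) • (T ∘L (c • q p • e))) p := by
    refine (T.hasFDerivAt.comp p ((hq p).mul_const c)).mul
      ((ha (w + q p) ?_ ?_).comp p ((hq p).const_add w))
    · simpa [hq_norm] using (Real.log_le_iff_le_exp h₁).1 hp.1
    · simpa [hq_norm] using (Real.le_log_iff_exp_le (h₁.trans_le h₂)).1 hp.2
  have hI {r : ℝ} (hr : 0 < r) : mulCircleIntegral T a w r =
      ∫ θ in 0..2 * Real.pi, T (q (Real.log r, θ) * Complex.I) * a (w + q (Real.log r, θ)) := by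
    simp [mulCircleIntegral, hq_circle hr, circleMap]
  rw [hI h₁, hI (h₁.trans_le h₂)]
  refine (integral_right_eq_integral_left_of_divergence_eq_zero (Real.log_le_log h₁ h₂)
    Real.two_pi_pos.le (fun p hp ↦ hderiv Complex.I p hp.1)
    (fun p hp ↦ (hderiv 1 p hp.1).neg) (fun p _ ↦ ?_) fun x _ ↦ ?_).symm
  · simp only [ContinuousLinearMap.comp_apply, add_apply, smul_apply, neg_apply, he,
      Complex.ofReal_one, Complex.ofReal_zero, zero_mul, one_mul, add_zero, zero_add, smul_eq_mul,
      mul_one, one_smul, mul_comm Complex.I]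
    ring
  · simp [q, he, Complex.exp_add]

theorem intervalIntegrable_mul_comp_circleMap (hr : 0 ≤ r) (ha : ContinuousOn a (sphere w r)) :
    IntervalIntegrable (fun θ ↦ T (circleMap 0 r θ * Complex.I) * a (circleMap w r θ))
      MeasureTheory.volume 0 (2 * Real.pi) := by
  refine Continuous.intervalIntegrable (Continuous.mul (by fun_prop) ?_) _ _
  exact ha.comp_continuous (continuous_circleMap w r) (circleMap_mem_sphere w hr)

theorem mulCircleIntegral_sub (hr : 0 ≤ r) (ha : ContinuousOn a (sphere w r))
    (hb : ContinuousOn b (sphere w r)) : mulCircleIntegral T (fun z ↦ a z - b z) w r =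
      mulCircleIntegral T a w r - mulCircleIntegral T b w r := by
  simp only [mulCircleIntegral, mul_sub]
  exact intervalIntegral.integral_sub (intervalIntegrable_mul_comp_circleMap hr ha)
    (intervalIntegrable_mul_comp_circleMap hr hb)

theorem map_mulCircleIntegral [CompleteSpace A] {F : Type*} [NormedAddCommGroup F] [NormedSpace ℝ F]
    [CompleteSpace F] (L : A →L[ℝ] F) (hr : 0 ≤ r) (ha : ContinuousOn a (sphere w r)) :
    L (mulCircleIntegral T a w r) =
      ∫ θ in 0..2 * Real.pi, L (T (circleMap 0 r θ * Complex.I) * a (circleMap w r θ)) :=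
  (L.intervalIntegral_comp_comm (intervalIntegrable_mul_comp_circleMap hr ha)).symm

theorem mulCircleIntegral_eq_zero_of_isLittleO
    (ha : ∀ z ∈ ball w d \ {w}, HasFDerivAt a (b z • T) z)
    (ho : a =o[𝓝[≠] w] fun z ↦ ‖z - w‖⁻¹) (hr : 0 < r) (hrd : r < d) :
    mulCircleIntegral T a w r = 0 := by
  have hle : ∀ ε > 0, ‖mulCircleIntegral T a w r‖ ≤ 2 * Real.pi * ‖T‖ * ε := by
    intro ε hε
    obtain ⟨δ, hδ, hball⟩ := Metric.eventually_nhds_iff.1 (eventually_nhdsWithin_iff.1 (ho.def hε))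
    obtain ⟨s, hs, hsδ⟩ := exists_between (lt_min hδ hr)
    obtain ⟨hsδ, hsr⟩ := lt_min_iff.1 hsδ
    rw [← mulCircleIntegral_eq_of_hasFDerivAt hs hsr.le fun z hz₁ hz₂ ↦ ha z ⟨?_, ?_⟩]
    · refine (norm_mulCircleIntegral_le hs.le (C := ε * s⁻¹) fun z hz ↦ ?_).trans_eq (by field_simp)
      have hzs : ‖z - w‖ = s := by simpa using hz
      simpa [hzs, abs_of_pos hs] using hball (y := z) (by simpa [dist_eq_norm, hzs])
        (fun h ↦ by simp_all)
    · simpa [dist_eq_norm] using hz₂.trans_lt hrd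
    · rintro rfl
      exact hs.not_ge (by simpa using hz₁)
  have hlim : Tendsto (fun ε : ℝ ↦ 2 * Real.pi * ‖T‖ * ε) (𝓝[>] 0) (𝓝 0) :=
    Tendsto.mono_left (Continuous.tendsto' (by fun_prop) _ _ (mul_zero _)) nhdsWithin_le_nhds
  exact norm_le_zero_iff.1 (ge_of_tendsto hlim (eventually_mem_nhdsWithin.mono hle))

/-- The integral of `T(dz) / T z` over the unit circle, the counterpart of `2πi` in the Cauchy
formula for `T`. -/
noncomputable def mulPeriod (T : ℂ →L[ℝ] A) : A :=
  mulCircleIntegral T (fun z ↦ Ring.inverse (T z)) 0 1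

theorem map_mulPeriod [CompleteSpace A] {F : Type*} [NormedAddCommGroup F] [NormedSpace ℝ F]
    [CompleteSpace F] (hT : ∀ z ≠ 0, IsUnit (T z)) (L : A →L[ℝ] F) : L (mulPeriod T) =
      ∫ θ in 0..2 * Real.pi,
        L (T (circleMap 0 1 θ * Complex.I) * Ring.inverse (T (circleMap 0 1 θ))) :=
  map_mulCircleIntegral L zero_le_one ((continuousOn_inverse_comp hT).mono fun _ hz ↦
    ne_of_mem_sphere hz one_ne_zero)

theorem mulCircleIntegral_inverse_sub_mul [CompleteSpace A] (hT : ∀ z ≠ 0, IsUnit (T z))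
    (hr : 0 < r) (c : A) :
    mulCircleIntegral T (fun z ↦ Ring.inverse (T (z - w)) * c) w r = mulPeriod T * c := by
  have hscale (θ : ℝ) : circleMap 0 r θ = r • circleMap 0 1 θ := by simp [circleMap]
  have hint (θ : ℝ) : T (circleMap 0 r θ * Complex.I) *
      (Ring.inverse (T (circleMap w r θ - w)) * c) =
      T (circleMap 0 1 θ * Complex.I) * Ring.inverse (T (circleMap 0 1 θ)) * c := by
    rw [circleMap_sub_center, hscale, smul_mul_assoc, map_smul, map_smul, ringInverse_smul,
      ← mul_assoc, smul_mul_smul_comm, mul_inv_cancel₀ hr.ne', one_smul]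
  simp only [mulCircleIntegral, hint]
  exact (map_mulPeriod hT ((ContinuousLinearMap.mul ℝ A).flip c)).symm

theorem exists_norm_inverse_le [CompleteSpace A] (hT : ∀ z ≠ 0, IsUnit (T z)) :
    ∃ M, ∀ z, ‖Ring.inverse (T z)‖ ≤ M / ‖z‖ := by
  obtain ⟨M, hM⟩ := (isCompact_sphere (0 : ℂ) 1).exists_bound_of_continuousOn
    ((continuousOn_inverse_comp hT).mono fun z hz ↦ by rintro rfl; simp at hz)
  refine ⟨M, fun z ↦ ?_⟩
  rcases eq_or_ne z 0 with rfl | hz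
  · simp
  have hz' : ‖z‖⁻¹ • z ∈ sphere (0 : ℂ) 1 := by simp [hz]
  have := hM _ hz'
  rw [map_smul, ringInverse_smul, inv_inv, norm_smul, norm_norm] at this
  rwa [le_div_iff₀' (norm_pos_iff.2 hz)]

theorem hasFDerivAt_inverse_sub_sq_mul [CompleteSpace A] {z : ℂ} {g : A} (c : A)
    (hz : IsUnit (T (z - w))) (hf : HasFDerivAt f (g • T) z) :
    HasFDerivAt (fun z ↦ Ring.inverse (T (z - w)) ^ 2 * (f z - c))
      ((Ring.inverse (T (z - w)) ^ 2 * g - 2 * Ring.inverse (T (z - w)) ^ 3 * (f z - c)) • T)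
      z := by
  refine (((hasFDerivAt_inverse_sub hz).pow 2).mul (hf.sub_const c)).congr_fderiv ?_
  ext v
  simp only [map_sub, Nat.add_one_sub_one, pow_one, nsmul_eq_mul, Nat.cast_ofNat, add_apply,
    smul_apply, smul_eq_mul]
  ring

theorem hasFDerivAt_inverse_sub_mul [CompleteSpace A] {z : ℂ} (c : A)
    (hz : IsUnit (T (z - w))) :
    HasFDerivAt (fun z ↦ Ring.inverse (T (z - w)) * c)
      ((-Ring.inverse (T (z - w)) ^ 2 * c) • T) z := by
  refine ((hasFDerivAt_inverse_sub hz).mul_const c).congr_fderiv ?_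
  ext v
  simp only [smul_apply, smul_eq_mul]
  ring

theorem inverse_sq_mul_sub_isLittleO [CompleteSpace A] (hT : ∀ z ≠ 0, IsUnit (T z)) {g : A}
    (hf : HasFDerivAt f (g • T) w) :
    (fun z ↦ Ring.inverse (T (z - w)) ^ 2 * (f z - f w) - Ring.inverse (T (z - w)) * g)
      =o[𝓝[≠] w] fun z ↦ ‖z - w‖⁻¹ := by
  obtain ⟨M, hinv⟩ := exists_norm_inverse_le hT
  have hO : (fun z ↦ Ring.inverse (T (z - w)) ^ 2) =O[𝓝[≠] w] fun z ↦ ‖z - w‖⁻¹ ^ 2 :=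
    (Asymptotics.IsBigO.of_bound M (.of_forall fun z ↦ by
      simpa [div_eq_mul_inv] using hinv (z - w))).pow 2
  have ho : (fun z ↦ f z - f w - T (z - w) * g) =o[𝓝[≠] w] fun z ↦ ‖z - w‖ := by
    simpa [mul_comm] using (hf.isLittleO.mono nhdsWithin_le_nhds).norm_right
  refine (hO.mul_isLittleO ho).congr' ?_ ?_ <;>
    filter_upwards [self_mem_nhdsWithin] with z (hz : z ≠ w)
  · have hunit := Ring.inverse_mul_cancel _ (hT _ (sub_ne_zero.2 hz))
    linear_combination -Ring.inverse (T (z - w)) * g * hunit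
  · field_simp [norm_ne_zero_iff.2 (sub_ne_zero.2 hz)]

theorem mulPeriod_mul_eq [CompleteSpace A] (hT : ∀ z ≠ 0, IsUnit (T z))
    (hf : ∀ z ∈ ball w d, HasFDerivAt f (g z • T) z) (hr : 0 < r) (hrd : r < d) :
    mulPeriod T * g w =
      mulCircleIntegral T (fun z ↦ Ring.inverse (T (z - w)) ^ 2 * (f z - f w)) w r := by
  have hunit {z} (hz : z ≠ w) : IsUnit (T (z - w)) := hT _ (sub_ne_zero.2 hz)
  have hmem {z} (hz : z ∈ sphere w r) : z ∈ ball w d \ {w} :=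
    ⟨sphere_subset_closedBall.trans (closedBall_subset_ball hrd) hz, ne_of_mem_sphere hz hr.ne'⟩
  have hF (z) (hz : z ∈ ball w d \ {w}) :=
    hasFDerivAt_inverse_sub_sq_mul (f w) (hunit hz.2) (hf z hz.1)
  have hG (z) (hz : z ∈ ball w d \ {w}) := hasFDerivAt_inverse_sub_mul (g w) (hunit hz.2)
  rw [← mulCircleIntegral_inverse_sub_mul hT hr, ← sub_eq_zero, ← neg_eq_zero, neg_sub,
    ← mulCircleIntegral_sub hr.le
      (fun z hz ↦ (hF z (hmem hz)).continuousAt.continuousWithinAt)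
      (fun z hz ↦ (hG z (hmem hz)).continuousAt.continuousWithinAt)]
  refine mulCircleIntegral_eq_zero_of_isLittleO
    (fun z hz ↦ ((hF z hz).sub (hG z hz)).congr_fderiv (sub_smul _ _ T).symm)
    (inverse_sq_mul_sub_isLittleO hT (hf w (mem_ball_self (hr.trans hrd)))) hr hrd

theorem exists_norm_deriv_le [CompleteSpace A] (hT : ∀ z ≠ 0, IsUnit (T z))
    (hJ : IsUnit (mulPeriod T)) :
    ∃ B, 0 ≤ B ∧ ∀ ⦃f g : ℂ → A⦄ ⦃w : ℂ⦄ ⦃d : ℝ⦄ ⦃c : A⦄ ⦃S : ℝ⦄, 0 < d →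
      (∀ p ∈ ball w d, HasFDerivAt f (g p • T) p) → (∀ p ∈ ball w d, ‖f p - c‖ ≤ S) →
      ‖g w‖ ≤ B * S / d := by
  obtain ⟨M, hinv⟩ := exists_norm_inverse_le hT
  refine ⟨‖Ring.inverse (mulPeriod T)‖ * (8 * Real.pi * ‖T‖ * M ^ 2), by positivity,
    fun f g w d c S hd hf hS ↦ ?_⟩
  have hkernel : ∀ z ∈ sphere w (d / 2),
      ‖Ring.inverse (T (z - w)) ^ 2 * (f z - f w)‖ ≤ (M / (d / 2)) ^ 2 * (S + S) := by
    intro z hz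
    have hzd : ‖z - w‖ = d / 2 := mem_sphere_iff_norm.1 hz
    have hfz : ‖f z - f w‖ ≤ S + S := by
      rw [← sub_sub_sub_cancel_right (f z) (f w) c]
      refine (norm_sub_le _ _).trans (add_le_add (hS z ?_) (hS w (mem_ball_self hd)))
      exact sphere_subset_closedBall.trans (closedBall_subset_ball (half_lt_self hd)) hz
    refine (norm_mul_le _ _).trans ?_
    gcongr
    exact (norm_pow_le' _ two_pos).trans (by gcongr; exact hzd ▸ hinv (z - w))
  calc ‖g w‖ = ‖Ring.inverse (mulPeriod T) * (mulPeriod T * g w)‖ := by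
        rw [Ring.inverse_mul_cancel_left _ _ hJ]
    _ ≤ ‖Ring.inverse (mulPeriod T)‖ *
          (2 * Real.pi * (‖T‖ * (d / 2) * ((M / (d / 2)) ^ 2 * (S + S)))) := by
        refine (norm_mul_le _ _).trans ?_
        rw [mulPeriod_mul_eq hT hf (half_pos hd) (half_lt_self hd)]
        gcongr
        exact norm_mulCircleIntegral_le (half_pos hd).le hkernel
    _ = _ := by field_simp; ring

end Cauchy

theorem im_map_mul_I_div_ne_zero {l : ℂ →L[ℝ] ℂ} (hl : ∀ z ≠ 0, l z ≠ 0) {q : ℂ} (hq : q ≠ 0) :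
    (l (q * Complex.I) / l q).im ≠ 0 := by
  intro him
  obtain ⟨c, hc⟩ : ∃ c : ℝ, l (q * Complex.I) = c • l q :=
    ⟨(l (q * Complex.I) / l q).re, by
      rw [Complex.real_smul, ← div_eq_iff (hl q hq)]
      exact Complex.ext rfl him⟩
  have hne : q * Complex.I - c • q ≠ 0 := by
    rw [Complex.real_smul, mul_comm q, ← sub_mul]
    exact mul_ne_zero (fun h ↦ by simpa using congr_arg Complex.im h) hq
  exact hl _ hne (by rw [map_sub, map_smul, hc, sub_self])

theorem intervalIntegral_ne_zero_of_continuousOn {h : ℝ → ℝ} {a b : ℝ} (hab : a ≠ b)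
    (hc : ContinuousOn h (Set.uIcc a b)) (hne : ∀ x ∈ Set.uIcc a b, h x ≠ 0) :
    ∫ x in a..b, h x ≠ 0 := by
  obtain ⟨x, hx, hhx⟩ := exists_eq_interval_average hab hc
  intro h0
  apply hne x (Set.Ioo_subset_Icc_self hx)
  rw [hhx, interval_average_eq, h0, smul_zero]

theorem norm_smul_clm_le {E A : Type*} [NormedAddCommGroup E] [NormedSpace ℝ E] [NormedCommRing A]
    [NormedAlgebra ℝ A] (g : A) (T : E →L[ℝ] A) : ‖g • T‖ ≤ ‖g‖ * ‖T‖ :=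
  (g • T).opNorm_le_bound (by positivity) fun v ↦ by
    rw [mul_assoc]
    exact (norm_mul_le _ _).trans (by gcongr; exact T.le_opNorm v)

section CauchyEstimate

variable {A : Type*} [NormedCommRing A] [NormedAlgebra ℂ A] [CompleteSpace A]

theorem isUnit_mulPeriod {T : ℂ →L[ℝ] A} (hT : ∀ z ≠ 0, IsUnit (T z)) : IsUnit (mulPeriod T) := by
  by_contra hJ
  obtain ⟨φ, hφ⟩ := WeakDual.CharacterSpace.exists_apply_eq_zero hJ
  let φL : A →L[ℝ] ℂ := (WeakDual.CharacterSpace.toCLM φ).restrictScalars ℝ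
  have hφL (x : A) : φL x = φ x := rfl
  have hl (z) (hz : z ≠ 0) : φ (T z) ≠ 0 := ((hT z hz).map φ).ne_zero
  have hinv (z) (hz : z ≠ 0) : φ (Ring.inverse (T z)) = (φ (T z))⁻¹ :=
    eq_inv_of_mul_eq_one_right (by rw [← map_mul, Ring.mul_inverse_cancel _ (hT z hz), map_one])
  have him : ∫ θ in 0..2 * Real.pi, (φ (T (circleMap 0 1 θ * Complex.I)) /
      φ (T (circleMap 0 1 θ))).im = 0 := by
    have h := map_mulPeriod hT (Complex.imCLM ∘L φL)
    rw [ContinuousLinearMap.comp_apply, hφL, hφ, map_zero] at h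
    simpa [hφL, hinv, circleMap_ne_center, div_eq_mul_inv] using h.symm
  refine intervalIntegral_ne_zero_of_continuousOn Real.two_pi_pos.ne ?_ (fun θ _ ↦ ?_) him
  · refine (Complex.continuous_im.comp (Continuous.div ?_ ?_ fun θ ↦ ?_)).continuousOn
    · exact (map_continuous φ).comp (T.continuous.comp (by fun_prop))
    · exact (map_continuous φ).comp (T.continuous.comp (by fun_prop))
    · exact hl _ (circleMap_ne_center one_ne_zero)
  · exact im_map_mul_I_div_ne_zero (l := φL ∘L T) hl (circleMap_ne_center one_ne_zero)

theorem exists_norm_gateauxDeriv_le {T : ℂ →L[ℝ] A} (hT : ∀ z ≠ 0, IsUnit (T z)) :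
    ∃ B, 0 ≤ B ∧ ∀ ⦃f g : ℂ → A⦄ ⦃w : ℂ⦄ ⦃d M : ℝ⦄, 0 < d →
      (∀ p ∈ ball w d, HasGateauxDerivAt f (g p • T) p) → (∀ p ∈ ball w d, ‖f p‖ ≤ M) →
      ‖g w‖ ≤ B * M / d := by
  obtain ⟨B, hB, hderiv⟩ := exists_norm_deriv_le hT (isUnit_mulPeriod hT)
  refine ⟨B, hB, fun f g w d M hd hf hM ↦ hderiv (c := 0) hd ?_ (by simpa using hM)⟩
  refine hasFDerivAt_of_hasGateauxDerivAt_of_hasGradientEstimate isOpen_ball hf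
    (fun z hz ↦ ⟨M, (isOpen_ball.eventually_mem hz).mono hM⟩) (B := B * ‖T‖) (by positivity) ?_
  intro w d c S hd _ hf hS
  calc ‖g w • T‖ ≤ ‖g w‖ * ‖T‖ := norm_smul_clm_le _ _
    _ ≤ B * S / d * ‖T‖ := by gcongr; exact hderiv hd hf hS
    _ = B * ‖T‖ * S / d := by ring

theorem exists_eventually_norm_gateauxDeriv_le {E : Type*} [NormedAddCommGroup E] [NormedSpace ℝ E]
    {S : ℂ →L[ℝ] E} {P : E →L[ℝ] A} {Φ g : E → A} {ζ₀ : E} {M : ℝ}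
    (hS : ∀ z ≠ 0, IsUnit (P (S z))) (hG : ∀ᶠ ζ in 𝓝 ζ₀, HasGateauxDerivAt Φ (g ζ • P) ζ)
    (hM : ∀ᶠ ζ in 𝓝 ζ₀, ‖Φ ζ‖ ≤ M) : ∃ C, ∀ᶠ ζ in 𝓝 ζ₀, ‖g ζ‖ ≤ C := by
  obtain ⟨B, -, hB⟩ := exists_norm_gateauxDeriv_le (T := P ∘L S) hS
  have htendsto : Tendsto (fun p : E × ℂ ↦ p.1 + S p.2) (𝓝 ζ₀ ×ˢ 𝓝 0) (𝓝 ζ₀) := by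
    rw [← nhds_prod_eq]
    exact Continuous.tendsto' (by fun_prop) _ _ (by simp)
  obtain ⟨V, hV, W, hW, hVW⟩ := eventually_prod_iff.1 (htendsto.eventually (hG.and hM))
  obtain ⟨d, hd, hball⟩ := Metric.eventually_nhds_iff_ball.1 hW
  refine ⟨B * M / d, hV.mono fun ζ hζ ↦ ?_⟩
  simpa using hB (f := fun z ↦ Φ (ζ + S z)) (g := fun z ↦ g (ζ + S z)) (w := 0) hd
    (fun z hz ↦ (hVW hζ (hball z hz)).1.comp_const_add) (fun z hz ↦ (hVW hζ (hball z hz)).2)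

end CauchyEstimate

section CondC

variable {A : Type*} [NormedCommRing A] [NormedAlgebra ℂ A] {E : Submodule ℝ A}

theorem GateauxDiffAt.hasGateauxDerivAt {Φ : E → A} {ζ : E} {g : A} (h : GateauxDiffAt Φ ζ g) :
    HasGateauxDerivAt Φ (g • E.subtypeL) ζ := by
  intro v
  have hright : Tendsto (fun t : ℝ ↦ t⁻¹ • (Φ (ζ + t • v) - Φ ζ)) (𝓝[>] 0) (𝓝 (g * v)) :=
    mul_comm (v : A) g ▸ h v
  have hleft : Tendsto (fun t : ℝ ↦ t⁻¹ • (Φ (ζ + t • v) - Φ ζ)) (𝓝[<] 0) (𝓝 (g * v)) := by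
    have hneg : Tendsto (fun t : ℝ ↦ -t) (𝓝[<] 0) (𝓝[>] 0) := by
      simpa using tendsto_neg_nhdsLT (a := (0 : ℝ))
    simpa [inv_neg, Function.comp_def, mul_comm] using ((h (-v)).comp hneg).neg
  rw [HasLineDerivAt, hasDerivAt_iff_tendsto_slope_zero, ← nhdsLT_sup_nhdsGT]
  simpa using hleft.sup hright

theorem CondC.exists_plane_forall_isUnit [CompleteSpace A] [Finite (A →ₐ[ℂ] ℂ)] (hC : CondC E) :
    ∃ S : ℂ →L[ℝ] E, ∀ z ≠ 0, IsUnit (S z : A) := by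
  let L (φ : A →ₐ[ℂ] ℂ) : E →ₗ[ℝ] ℂ := (φ.toLinearMap.restrictScalars ℝ).comp E.subtype
  obtain ⟨u, hu⟩ := Module.Dual.exists_forall_ne_zero_of_forall_exists
    (fun φ ↦ Complex.reLm ∘ₗ L φ) fun φ ↦ (hC φ 1).imp fun x hx ↦ by simp_all [L]
  have hLu (φ) : L φ u ≠ 0 := fun h ↦ hu φ (by simp [h])
  obtain ⟨v, hv⟩ := Module.Dual.exists_forall_ne_zero_of_forall_exists
    (fun φ ↦ Complex.imLm ∘ₗ LinearMap.mulLeft ℝ (L φ u)⁻¹ ∘ₗ L φ) fun φ ↦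
      (hC φ (L φ u * Complex.I)).imp fun x (hx : L φ x = _) ↦ by simp [hx, hLu]
  refine ⟨Complex.reCLM.smulRight u + Complex.imCLM.smulRight v, fun z hz ↦ ?_⟩
  by_contra hunit
  obtain ⟨φ, hφ⟩ := WeakDual.CharacterSpace.exists_apply_eq_zero hunit
  let ψ : A →ₐ[ℂ] ℂ := WeakDual.CharacterSpace.toAlgHom φ
  have hL : z.re • L ψ u + z.im • L ψ v = 0 := by
    rw [← map_smul, ← map_smul, ← map_add]
    exact hφ
  have hdiv : (z.re : ℂ) + z.im * ((L ψ u)⁻¹ * L ψ v) = 0 := by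
    rw [Complex.real_smul, Complex.real_smul] at hL
    linear_combination (L ψ u)⁻¹ * hL - z.re * inv_mul_cancel₀ (hLu ψ)
  have him : z.im = 0 := by
    have hv' : ((L ψ u)⁻¹ * L ψ v).im ≠ 0 := hv ψ
    simpa only [Complex.add_im, Complex.ofReal_im, Complex.im_ofReal_mul, zero_add,
      Complex.zero_im, mul_eq_zero, hv', or_false] using congr_arg Complex.im hdiv
  have hre : z.re = 0 := by simpa [him] using hdiv
  exact hz (Complex.ext hre him)

end CondC

theorem gateaux_locBounded_continuous_general {A : Type*} [NormedCommRing A] [NormedAlgebra ℂ A]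
    [CompleteSpace A] [Finite (A →ₐ[ℂ] ℂ)] {E : Submodule ℝ A} (hC : CondC E) {Ω : Set E}
    (hΩ : IsOpen Ω) {Φ : E → A} (hlb : IsLocBoundedOn Ω Φ)
    (hG : ∀ ζ ∈ Ω, ∃ g : A, GateauxDiffAt Φ ζ g) : ContinuousOn Φ Ω := by
  obtain ⟨S, hS⟩ := hC.exists_plane_forall_isUnit
  choose! g hg using hG
  intro ζ₀ hζ₀
  have hderiv : ∀ᶠ ζ in 𝓝 ζ₀, HasGateauxDerivAt Φ (g ζ • E.subtypeL) ζ :=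
    (hΩ.eventually_mem hζ₀).mono fun ζ hζ ↦ (hg ζ hζ).hasGateauxDerivAt
  obtain ⟨M, hM⟩ : ∃ M, ∀ᶠ ζ in 𝓝 ζ₀, ‖Φ ζ‖ ≤ M := by
    obtain ⟨r, hr, M, hM⟩ := hlb ζ₀ hζ₀
    refine ⟨M, ?_⟩
    filter_upwards [hΩ.mem_nhds hζ₀, ball_mem_nhds ζ₀ hr] with ζ hζ hζr
    exact hM ζ hζ (mem_ball_iff_norm.1 hζr)
  obtain ⟨C, hC⟩ := exists_eventually_norm_gateauxDeriv_le hS hderiv hM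
  obtain ⟨K, s, hs, -, hK⟩ := exists_lipschitzOnWith_of_eventually_norm_gateauxDeriv_le hderiv
    (hC.mono fun ζ hζ ↦ (norm_smul_clm_le (g ζ) E.subtypeL).trans
      (mul_le_mul_of_nonneg_right hζ (norm_nonneg _)))
  exact (hK.continuousOn.continuousAt hs).continuousWithinAt

/-- Under condition (C), a locally bounded, Gâteaux differentiable function on an
open subset of `E_k` is continuous there. -/
theorem gateaux_locBounded_continuous
    {A : Type*} [NormedCommRing A] [NormedAlgebra ℂ A] [FiniteDimensional ℂ A]
    {k : ℕ} (hk : 2 ≤ k) (e : Fin k → A) (he0 : e ⟨0, by omega⟩ = 1)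
    (hli : LinearIndependent ℝ e)
    (hC : CondC (Submodule.span ℝ (Set.range e)))
    (Ω : Set (Submodule.span ℝ (Set.range e))) (hΩ : IsOpen Ω)
    (Φ : Submodule.span ℝ (Set.range e) → A)
    (hlb : IsLocBoundedOn Ω Φ)
    (hG : ∀ ζ ∈ Ω, ∃ g : A, GateauxDiffAt Φ ζ g) :
    ContinuousOn Φ Ω := by
  have : CompleteSpace A := FiniteDimensional.complete ℂ A
  exact gateaux_locBounded_continuous_general hC hΩ hlb hG
end

section
/- Suppose condition (C) holds, and let Ω ⊆ E_k be an open connected set such that for every character φ of A and every a ∈ E_k the intersection Ω ∩ (a + M_φ) is path-connected. Let Φ : Ω → A be locally bounded in Ω and differentiable in the sense of Gâteaux at every point of Ω. Then for every character φ of A there exists a function F : ℂ → ℂ which is holomorphic (complex differentiable) on the set φ(Ω) := {φ(ζ) : ζ ∈ Ω} and satisfies F(φ(ζ)) = φ(Φ(ζ)) for all ζ ∈ Ω. -/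
open Filter Topology

/-!
On each fibre of a character `φ` the function `φ ∘ Φ` has zero derivative along the lines of the
fibre, so it is constant there and descends to a function `F` on `φ(Ω)`. Gâteaux differentiability
gives `F` both partial derivatives and the Cauchy–Riemann equation everywhere, and `F` is locally
bounded; Tolstov's theorem then makes `F` holomorphic.

For Tolstov's theorem, suppose the closed set `Z` of points of non-analyticity is nonempty. By
Baire, on a portion of `Z` the function `f` satisfies a uniform Lipschitz estimate along the
horizontal and the vertical line through each point. For `w` near that portion but off `Z`, the
largest disc about `w` avoiding `Z` touches `Z` at some `q`. The product of the rotates of `f - f q`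
about `w` by the powers of `i` is small on the boundary of a square about `w`: on each side, one of
the factors is evaluated on the horizontal or vertical line through `q`. Iterating the resulting
estimate over dyadic scales yields linear growth of `f` away from `Z`, hence bounded partial
derivatives near a point of `Z`. With bounded partial derivatives, Fubini's theorem turns the
Cauchy–Riemann equation into the vanishing of integrals over boundaries of rectangles, and Morera's
theorem gives analyticity at that point of `Z`, a contradiction.
-/

open Complex Metric MeasureTheory Set
open scoped Interval NNReal

section LineDeriv

variable {V E : Type*} [NormedAddCommGroup V] [NormedSpace ℝ V]
  [NormedAddCommGroup E] [NormedSpace ℝ E]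

lemma hasDerivAt_comp_add_smul_of_hasLineDerivAt {f : V → E} {f' : E} {x v : V} {t : ℝ}
    (h : HasLineDerivAt ℝ f f' (x + t • v) v) :
    HasDerivAt (fun s : ℝ => f (x + s • v)) f' t := by
  have hshift : HasDerivAt (fun s : ℝ => f (x + t • v + (s - t) • v)) f' t :=
    HasDerivAt.comp_sub_const t t (by rwa [sub_self])
  simpa only [add_assoc, ← add_smul, add_sub_cancel] using hshift

lemma exists_norm_add_smul_sub_le_of_hasLineDerivAt {f : V → E} {f' : E} {x v : V}
    (h : HasLineDerivAt ℝ f f' x v) :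
    ∃ M : ℝ≥0, ∀ᶠ t : ℝ in 𝓝 0, ‖f (x + t • v) - f x‖ ≤ M * |t| := by
  obtain ⟨M, hM, hbound⟩ := h.isBigO_sub.exists_nonneg
  exact ⟨⟨M, hM⟩, by simpa only [zero_smul, add_zero, sub_zero] using! hbound.bound⟩

lemma norm_add_smul_sub_le_of_hasLineDerivAt {s : Set V} (hs : Convex ℝ s) {f f' : V → E}
    {C : ℝ} {v : V} (hf : ∀ x ∈ s, HasLineDerivAt ℝ f (f' x) x v) (hC : ∀ x ∈ s, ‖f' x‖ ≤ C)
    {x : V} {t : ℝ} (hx : x ∈ s) (hxt : x + t • v ∈ s) : ‖f (x + t • v) - f x‖ ≤ C * |t| := by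
  have hconv : Convex ℝ {τ : ℝ | x + τ • v ∈ s} := by
    simpa [AffineMap.lineMap_apply, preimage, add_comm] using
      hs.affine_preimage (AffineMap.lineMap x (x + v))
  have hx₀ : (0 : ℝ) ∈ {τ : ℝ | x + τ • v ∈ s} := by simpa using hx
  simpa using hconv.norm_image_sub_le_of_norm_hasDerivWithin_le
    (fun τ hτ => (hasDerivAt_comp_add_smul_of_hasLineDerivAt (hf _ hτ)).hasDerivWithinAt)
    (fun τ hτ => hC _ hτ) hx₀ hxt

lemma stronglyMeasurable_indicator_of_continuousOn {X Y : Type*} [TopologicalSpace X]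
    [MeasurableSpace X] [OpensMeasurableSpace X] [TopologicalSpace Y] [Zero Y]
    [TopologicalSpace.PseudoMetrizableSpace Y] [SecondCountableTopologyEither X Y]
    {f : X → Y} {s : Set X}
    (hs : MeasurableSet s) (hf : ContinuousOn f s) : StronglyMeasurable (s.indicator f) := by
  classical
  have : SecondCountableTopologyEither s Y := by
    cases ‹SecondCountableTopologyEither X Y›.out <;> infer_instance
  rw [← piecewise_eq_indicator]
  refine stronglyMeasurable_of_restrict_of_restrict_compl hs ?_ ?_
  · rw [domRestrict_piecewise]
    exact (continuousOn_iff_continuous_domRestrict.mp hf).stronglyMeasurable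
  · rw [domRestrict_piecewise_compl]
    exact stronglyMeasurable_const

lemma stronglyMeasurable_indicator_of_hasLineDerivAt [MeasurableSpace V] [BorelSpace V]
    [SecondCountableTopologyEither V E] {f f' : V → E} {U : Set V} {v : V} (hU : IsOpen U)
    (hfc : ContinuousOn f U) (hf : ∀ x ∈ U, HasLineDerivAt ℝ f (f' x) x v) :
    StronglyMeasurable (U.indicator f') := by
  have hF := stronglyMeasurable_indicator_of_continuousOn hU.measurableSet hfc
  have hslope (n : ℕ) : StronglyMeasurable (U.indicator fun x =>
      ((n : ℝ)⁻¹)⁻¹ • (U.indicator f (x + (n : ℝ)⁻¹ • v) - U.indicator f x)) :=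
    (((hF.comp_measurable (measurable_add_const _)).sub hF).const_smul _).indicator hU.measurableSet
  refine stronglyMeasurable_of_tendsto atTop hslope (tendsto_pi_nhds.mpr fun x => ?_)
  by_cases hx : x ∈ U
  · have hF' : HasLineDerivAt ℝ (U.indicator f) (f' x) x v :=
      (hf x hx).congr_of_eventuallyEq (eqOn_indicator.eventuallyEq_of_mem (hU.mem_nhds hx))
    simpa only [indicator_of_mem hx, Function.comp_def] using hF'.tendsto_slope_zero_right.comp
      (tendsto_inv_atTop_nhdsGT_zero.comp tendsto_natCast_atTop_atTop)
  · simp only [indicator_of_notMem hx, tendsto_const_nhds]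

end LineDeriv

lemma intervalIntegrable_of_norm_le {E : Type*} [NormedAddCommGroup E] {G : ℝ → E} {N : ℝ}
    (hG : StronglyMeasurable G) (hGN : ∀ x, ‖G x‖ ≤ N) (a b : ℝ) :
    IntervalIntegrable G volume a b :=
  (intervalIntegrable_const (c := N)).mono_fun hG.aestronglyMeasurable
    (Eventually.of_forall fun x => (hGN x).trans (Real.le_norm_self N))

section CauchyRiemann

variable {E : Type*} [NormedAddCommGroup E] [NormedSpace ℂ E] {f g : ℂ → E} {U : Set ℂ} {N : ℝ}

/-- Existence of both partial derivatives of `f` at `z` together with the Cauchy–Riemann equation: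
`∂f/∂x = f'` and `∂f/∂y = i f'`. Neither joint differentiability nor continuity is required. -/
def HasCauchyRiemannDerivAt (f : ℂ → E) (f' : E) (z : ℂ) : Prop :=
  HasLineDerivAt ℝ f f' z 1 ∧ HasLineDerivAt ℝ f (I • f') z I

lemma HasCauchyRiemannDerivAt.hasDerivAt_re {f' : E} {x y : ℝ}
    (h : HasCauchyRiemannDerivAt f f' (x + y * I)) :
    HasDerivAt (fun s : ℝ => f (s + y * I)) f' x := by
  have h₁ : HasLineDerivAt ℝ f f' (y * I + x • (1 : ℂ)) 1 := by simpa [add_comm] using h.1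
  simpa [add_comm] using hasDerivAt_comp_add_smul_of_hasLineDerivAt h₁

lemma HasCauchyRiemannDerivAt.hasDerivAt_im {f' : E} {x y : ℝ}
    (h : HasCauchyRiemannDerivAt f f' (x + y * I)) :
    HasDerivAt (fun s : ℝ => f (x + s * I)) (I • f') y := by
  have h₂ : HasLineDerivAt ℝ f (I • f') (x + y • I) I := by simpa using h.2
  simpa using hasDerivAt_comp_add_smul_of_hasLineDerivAt h₂

lemma hasCauchyRiemannDerivAt_of_hasDerivAt {f' : E} {z : ℂ} (h : HasDerivAt f f' z) :
    HasCauchyRiemannDerivAt f f' z := by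
  have hℝ := h.hasFDerivAt.restrictScalars ℝ
  exact ⟨by simpa using hℝ.hasLineDerivAt 1, by simpa using hℝ.hasLineDerivAt I⟩

lemma dist_corner_right_le (w z : ℂ) : dist (⟨w.re, z.im⟩ : ℂ) z ≤ dist w z := by
  rw [Complex.dist_of_im_eq (z := ⟨w.re, z.im⟩) (w := z) rfl, dist_eq_norm w z]
  simpa [Real.dist_eq] using abs_re_le_norm (w - z)

lemma dist_corner_left_le (w z : ℂ) : dist (⟨w.re, z.im⟩ : ℂ) w ≤ dist w z := by
  rw [dist_comm, Complex.dist_of_re_eq (z := w) (w := ⟨w.re, z.im⟩) rfl, dist_eq_norm w z]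
  simpa [Real.dist_eq] using abs_im_le_norm (w - z)

lemma norm_sub_le_of_hasCauchyRiemannDerivAt_ball {z w : ℂ} {r : ℝ}
    (hf : ∀ ζ ∈ ball z r, HasCauchyRiemannDerivAt f (g ζ) ζ) (hg : ∀ ζ ∈ ball z r, ‖g ζ‖ ≤ N)
    (hw : w ∈ ball z r) : ‖f w - f z‖ ≤ 2 * N * ‖w - z‖ := by
  have hz : z ∈ ball z r := mem_ball_self (dist_nonneg.trans_lt (mem_ball.mp hw))
  have hN : 0 ≤ N := (norm_nonneg _).trans (hg z hz)
  have hc : (⟨w.re, z.im⟩ : ℂ) ∈ ball z r := (dist_corner_right_le w z).trans_lt hw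
  have hzc : z + (w.re - z.re) • (1 : ℂ) = ⟨w.re, z.im⟩ := by apply Complex.ext <;> simp
  have hcw : ⟨w.re, z.im⟩ + (w.im - z.im) • I = w := by apply Complex.ext <;> simp
  have hhor := norm_add_smul_sub_le_of_hasLineDerivAt (convex_ball z r)
    (fun ζ hζ => (hf ζ hζ).1) hg hz (hzc.symm ▸ hc)
  have hver := norm_add_smul_sub_le_of_hasLineDerivAt (convex_ball z r) (f' := fun ζ => I • g ζ)
    (fun ζ hζ => (hf ζ hζ).2) (by simpa [norm_smul] using hg) hc (hcw.symm ▸ hw)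
  rw [hzc] at hhor
  rw [hcw] at hver
  have hre : |w.re - z.re| ≤ ‖w - z‖ := abs_re_le_norm (w - z)
  have him : |w.im - z.im| ≤ ‖w - z‖ := abs_im_le_norm (w - z)
  calc ‖f w - f z‖ ≤ ‖f w - f ⟨w.re, z.im⟩‖ + ‖f ⟨w.re, z.im⟩ - f z‖ :=
        norm_sub_le_norm_sub_add_norm_sub _ _ _
    _ ≤ N * ‖w - z‖ + N * ‖w - z‖ := by
        gcongr
        · exact hver.trans (by gcongr)
        · exact hhor.trans (by gcongr)
    _ = 2 * N * ‖w - z‖ := by ring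

lemma continuousOn_of_hasCauchyRiemannDerivAt_of_norm_le (hU : IsOpen U)
    (hf : ∀ z ∈ U, HasCauchyRiemannDerivAt f (g z) z) (hg : ∀ z ∈ U, ‖g z‖ ≤ N) :
    ContinuousOn f U := by
  intro z hz
  obtain ⟨r, hr, hrU⟩ := Metric.isOpen_iff.mp hU z hz
  refine (continuousAt_of_locally_lipschitz hr (2 * N) fun w hw => ?_).continuousWithinAt
  simpa only [dist_eq_norm] using norm_sub_le_of_hasCauchyRiemannDerivAt_ball
    (fun ζ hζ => hf ζ (hrU hζ)) (fun ζ hζ => hg ζ (hrU hζ)) hw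

lemma intervalIntegral_swap_of_norm_le {G : ℂ → E} (hG : StronglyMeasurable G)
    (hGN : ∀ z, ‖G z‖ ≤ N) (a b c d : ℝ) :
    ∫ x : ℝ in a..b, ∫ y : ℝ in c..d, G (x + y * I) =
      ∫ y : ℝ in c..d, ∫ x : ℝ in a..b, G (x + y * I) := by
  have hmeas : Measurable fun p : ℝ × ℝ => (p.1 + p.2 * I : ℂ) := by fun_prop
  refine intervalIntegral_intervalIntegral_swap (IntegrableOn.of_bound ?_
    (hG.comp_measurable hmeas).aestronglyMeasurable N (Eventually.of_forall fun p => hGN _))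
  rw [Measure.volume_eq_prod, Measure.prod_prod]
  exact ENNReal.mul_lt_top (by simp) (by simp)

variable [CompleteSpace E]

lemma intervalIntegral_sub_eq_smul_of_hasCauchyRiemannDerivAt {z w : ℂ}
    (hg : StronglyMeasurable g) (hgN : ∀ ζ, ‖g ζ‖ ≤ N)
    (hf : ∀ ζ ∈ Rectangle z w, HasCauchyRiemannDerivAt f (g ζ) ζ) :
    ∫ x in z.re..w.re, (f (x + w.im * I) - f (x + z.im * I)) =
      I • ∫ y in z.im..w.im, (f (w.re + y * I) - f (z.re + y * I)) := by
  have hfg {x y : ℝ} (hx : x ∈ [[z.re, w.re]]) (hy : y ∈ [[z.im, w.im]]) :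
      HasCauchyRiemannDerivAt f (g (x + y * I)) (x + y * I) :=
    hf _ ⟨by simpa using hx, by simpa using hy⟩
  have hint_re (y : ℝ) : IntervalIntegrable (fun x : ℝ => g (x + y * I)) volume z.re w.re :=
    intervalIntegrable_of_norm_le (hg.comp_measurable (by fun_prop)) (fun x => hgN _) _ _
  have hint_im (x : ℝ) : IntervalIntegrable (fun y : ℝ => g (x + y * I)) volume z.im w.im :=
    intervalIntegrable_of_norm_le (hg.comp_measurable (by fun_prop)) (fun x => hgN _) _ _
  have hver {x : ℝ} (hx : x ∈ [[z.re, w.re]]) :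
      I • ∫ y in z.im..w.im, g (x + y * I) = f (x + w.im * I) - f (x + z.im * I) := by
    rw [← intervalIntegral.integral_smul]
    exact intervalIntegral.integral_eq_sub_of_hasDerivAt
      (fun y hy => (hfg hx hy).hasDerivAt_im) ((hint_im x).smul I)
  have hhor {y : ℝ} (hy : y ∈ [[z.im, w.im]]) :
      ∫ x in z.re..w.re, g (x + y * I) = f (w.re + y * I) - f (z.re + y * I) :=
    intervalIntegral.integral_eq_sub_of_hasDerivAt
      (fun x hx => (hfg hx hy).hasDerivAt_re) (hint_re y)
  calc ∫ x in z.re..w.re, (f (x + w.im * I) - f (x + z.im * I))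
    _ = ∫ x : ℝ in z.re..w.re, I • ∫ y : ℝ in z.im..w.im, g (x + y * I) :=
      intervalIntegral.integral_congr fun x hx => (hver hx).symm
    _ = I • ∫ y : ℝ in z.im..w.im, ∫ x : ℝ in z.re..w.re, g (x + y * I) := by
      rw [intervalIntegral.integral_smul, intervalIntegral_swap_of_norm_le hg hgN]
    _ = I • ∫ y in z.im..w.im, (f (w.re + y * I) - f (z.re + y * I)) := by
      rw [intervalIntegral.integral_congr fun y hy => hhor hy]

lemma wedgeIntegral_eq_neg_of_hasCauchyRiemannDerivAt {z w : ℂ} (hg : StronglyMeasurable g)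
    (hgN : ∀ ζ, ‖g ζ‖ ≤ N) (hf : ∀ ζ ∈ Rectangle z w, HasCauchyRiemannDerivAt f (g ζ) ζ) :
    wedgeIntegral z w f = -wedgeIntegral w z f := by
  have hfg {x y : ℝ} (hx : x ∈ [[z.re, w.re]]) (hy : y ∈ [[z.im, w.im]]) :
      HasCauchyRiemannDerivAt f (g (x + y * I)) (x + y * I) :=
    hf _ ⟨by simpa using hx, by simpa using hy⟩
  have hedge_re {y : ℝ} (hy : y ∈ [[z.im, w.im]]) :
      IntervalIntegrable (fun x : ℝ => f (x + y * I)) volume z.re w.re :=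
    ContinuousOn.intervalIntegrable fun x hx =>
      (hfg hx hy).hasDerivAt_re.continuousAt.continuousWithinAt
  have hedge_im {x : ℝ} (hx : x ∈ [[z.re, w.re]]) :
      IntervalIntegrable (fun y : ℝ => f (x + y * I)) volume z.im w.im :=
    ContinuousOn.intervalIntegrable fun y hy =>
      (hfg hx hy).hasDerivAt_im.continuousAt.continuousWithinAt
  have hboundary := intervalIntegral_sub_eq_smul_of_hasCauchyRiemannDerivAt hg hgN hf
  rw [intervalIntegral.integral_sub (hedge_re right_mem_uIcc) (hedge_re left_mem_uIcc),
    intervalIntegral.integral_sub (hedge_im right_mem_uIcc) (hedge_im left_mem_uIcc),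
    smul_sub] at hboundary
  rw [← add_eq_zero_iff_eq_neg, wedgeIntegral_add_wedgeIntegral_eq, add_sub_assoc, ← hboundary]
  abel

lemma isConservativeOn_of_hasCauchyRiemannDerivAt_of_norm_le (hU : IsOpen U)
    (hf : ∀ z ∈ U, HasCauchyRiemannDerivAt f (g z) z) (hg : ∀ z ∈ U, ‖g z‖ ≤ N) :
    IsConservativeOn f U := by
  intro z w hzw
  have hN : 0 ≤ N := (norm_nonneg _).trans (hg z (hzw ⟨left_mem_uIcc, left_mem_uIcc⟩))
  have hmeas : StronglyMeasurable (U.indicator g) :=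
    stronglyMeasurable_indicator_of_hasLineDerivAt hU
      (continuousOn_of_hasCauchyRiemannDerivAt_of_norm_le hU hf hg) fun ζ hζ => (hf ζ hζ).1
  refine wedgeIntegral_eq_neg_of_hasCauchyRiemannDerivAt (N := N) hmeas (fun ζ => ?_)
    fun ζ hζ => ?_
  · rw [norm_indicator_eq_indicator_norm]
    exact indicator_apply_le' (hg ζ) fun _ => hN
  · simpa only [indicator_of_mem (hzw hζ)] using hf ζ (hzw hζ)

theorem differentiableOn_of_hasCauchyRiemannDerivAt_of_norm_le (hU : IsOpen U)
    (hf : ∀ z ∈ U, HasCauchyRiemannDerivAt f (g z) z) (hg : ∀ z ∈ U, ‖g z‖ ≤ N) :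
    DifferentiableOn ℂ f U :=
  (isConservativeOn_and_continuousOn_iff_isDifferentiableOn hU).mp
    ⟨isConservativeOn_of_hasCauchyRiemannDerivAt_of_norm_le hU hf hg,
      continuousOn_of_hasCauchyRiemannDerivAt_of_norm_le hU hf hg⟩

end CauchyRiemann

section TwoConstants

lemma prod_le_mul_pow_card_sub_one {ι R : Type*} [CommSemiring R] [PartialOrder R] [IsOrderedRing R]
    {s : Finset ι} {a : ι → R} {A ε : R} {i : ι} (hi : i ∈ s)
    (h₀ : ∀ j ∈ s, 0 ≤ a j) (hA : ∀ j ∈ s, a j ≤ A) (hε : a i ≤ ε) :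
    ∏ j ∈ s, a j ≤ ε * A ^ (s.card - 1) := by
  classical
  have hs {j : ι} (hj : j ∈ s.erase i) : j ∈ s := Finset.mem_of_mem_erase hj
  calc ∏ j ∈ s, a j = a i * ∏ j ∈ s.erase i, a j := (Finset.mul_prod_erase s a hi).symm
    _ ≤ ε * ∏ _j ∈ s.erase i, A :=
      mul_le_mul hε (Finset.prod_le_prod (fun j hj => h₀ j (hs hj)) fun j hj => hA j (hs hj))
        (Finset.prod_nonneg fun j hj => h₀ j (hs hj)) ((h₀ i hi).trans hε)
    _ = ε * A ^ (s.card - 1) := by rw [Finset.prod_const, Finset.card_erase_of_mem hi]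

lemma I_pow_mul_mem_square {h : ℝ} {ζ : ℂ} (hζ : ζ ∈ Icc (-h) h ×ℂ Icc (-h) h) (k : ℕ) :
    I ^ k * ζ ∈ Icc (-h) h ×ℂ Icc (-h) h := by
  induction k with
  | zero => simpa using hζ
  | succ k ih =>
    rw [pow_succ', mul_assoc]
    simp only [mem_reProdIm, mem_Icc, mul_re, mul_im, I_re, I_im] at ih ⊢
    constructor <;> constructor <;> linarith [ih.1.1, ih.1.2, ih.2.1, ih.2.2]

lemma exists_I_pow_mul_re_eq {h : ℝ} {ζ : ℂ} (hh : 0 < h)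
    (hζ : ζ ∈ frontier (Ioo (-h) h ×ℂ Ioo (-h) h)) : ∃ k < 4, (I ^ k * ζ).re = h := by
  rw [frontier_reProdIm, frontier_Ioo (by linarith)] at hζ
  rcases hζ with ⟨-, him | him⟩ | ⟨hre | hre, -⟩
  · exact ⟨1, by norm_num, by simp_all⟩
  · exact ⟨3, by norm_num, by simp_all [I_pow_three]⟩
  · exact ⟨2, by norm_num, by simp_all⟩
  · exact ⟨0, by norm_num, by simp_all⟩

-- The product of the four rotates of `g` about `c` is small on the whole boundary of the square,
-- although `g` itself is only known to be small on one side.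
lemma norm_pow_four_le_of_norm_le_on_side {g : ℂ → ℂ} {c : ℂ} {h A ε : ℝ} (hh : 0 < h)
    (hg : ∀ ζ ∈ Icc (-h) h ×ℂ Icc (-h) h, DifferentiableAt ℂ g (c + ζ))
    (hA : ∀ ζ ∈ Icc (-h) h ×ℂ Icc (-h) h, ‖g (c + ζ)‖ ≤ A)
    (hε : ∀ ζ ∈ Icc (-h) h ×ℂ Icc (-h) h, ζ.re = h → ‖g (c + ζ)‖ ≤ ε) :
    ‖g c‖ ^ 4 ≤ ε * A ^ 3 := by
  let P : ℂ → ℂ := fun ζ => ∏ k ∈ Finset.range 4, g (c + I ^ k * ζ)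
  let S : Set ℂ := Ioo (-h) h ×ℂ Ioo (-h) h
  have hS : closure S = Icc (-h) h ×ℂ Icc (-h) h := by
    rw [closure_reProdIm, closure_Ioo (by linarith)]
  have hP : DifferentiableOn ℂ P (closure S) := by
    rw [hS]
    refine fun ζ hζ => (DifferentiableAt.fun_finsetProd fun k _ => ?_).differentiableWithinAt
    exact (hg _ (I_pow_mul_mem_square hζ k)).comp ζ (by fun_prop)
  have hfrontier : ∀ ζ ∈ frontier S, ‖P ζ‖ ≤ ε * A ^ 3 := by
    intro ζ hζ
    have hmem := hS ▸ frontier_subset_closure hζ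
    obtain ⟨k, hk, hre⟩ := exists_I_pow_mul_re_eq hh hζ
    rw [norm_prod]
    exact prod_le_mul_pow_card_sub_one (Finset.mem_range.mpr hk) (fun j _ => norm_nonneg _)
      (fun j _ => hA _ (I_pow_mul_mem_square hmem j)) (hε _ (I_pow_mul_mem_square hmem k) hre)
  have hbdd : Bornology.IsBounded S := (isBounded_Ioo _ _).reProdIm (isBounded_Ioo _ _)
  have h0 : (0 : ℂ) ∈ closure S := subset_closure ⟨by simpa using hh, by simpa using hh⟩
  simpa [P] using norm_le_of_forall_mem_frontier_norm_le hbdd hP.diffContOnCl hfrontier h0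

lemma norm_pow_four_le_of_norm_le_on_chord {g : ℂ → ℂ} {δ h A ε : ℝ} (hδ : 0 < δ) (hh : 0 ≤ h)
    (hhδ : 2 * h ^ 2 ≤ δ ^ 2) (hg : DifferentiableOn ℂ g (ball 0 δ))
    (hA : ∀ ζ ∈ ball 0 δ, ‖g ζ‖ ≤ A) (hε : ∀ ζ ∈ ball (0 : ℂ) δ, ζ.re = h → ‖g ζ‖ ≤ ε) :
    ‖g 0‖ ^ 4 ≤ ε * A ^ 3 := by
  have h0 : (0 : ℂ) ∈ ball 0 δ := mem_ball_self hδ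
  rcases hh.eq_or_lt with rfl | hh
  · rw [pow_succ']
    gcongr
    exacts [(norm_nonneg _).trans (hε 0 h0 rfl), hε 0 h0 rfl, hA 0 h0]
  -- The square of half-side `h` about `0` may touch the circle, so shrink it towards the chord.
  have hsquare : ∀ t ∈ Ioo 0 h, ‖g t‖ ^ 4 ≤ ε * A ^ 3 := by
    intro t ht
    have hball : ∀ ζ ∈ Icc (-(h - t)) (h - t) ×ℂ Icc (-(h - t)) (h - t),
        (t : ℂ) + ζ ∈ ball 0 δ := by
      rintro ζ ⟨hre, him⟩
      rw [mem_ball_zero_iff, ← sq_lt_sq₀ (norm_nonneg _) hδ.le, Complex.sq_norm, normSq_apply]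
      simp only [mem_preimage, mem_Icc, add_re, add_im, ofReal_re, ofReal_im, zero_add] at *
      nlinarith [ht.1, ht.2]
    refine norm_pow_four_le_of_norm_le_on_side (sub_pos.mpr ht.2)
      (fun ζ hζ => (hg _ (hball ζ hζ)).differentiableAt (isOpen_ball.mem_nhds (hball ζ hζ)))
      (fun ζ hζ => hA _ (hball ζ hζ)) fun ζ hζ hre => hε _ (hball ζ hζ) (by simp [hre])
  have hcont : ContinuousAt (fun t : ℝ => ‖g t‖ ^ 4) 0 := by
    have hg0 : ContinuousAt g ((0 : ℝ) : ℂ) := by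
      simpa using (hg.continuousOn.continuousAt (isOpen_ball.mem_nhds h0))
    exact ((hg0.comp continuous_ofReal.continuousAt).norm).pow 4
  simpa using le_of_tendsto (hcont.tendsto.mono_left nhdsWithin_le_nhds)
    (mem_of_superset (Ioo_mem_nhdsGT hh) hsquare)

lemma exists_rotation_to_cross (a : ℂ) : ∃ κ : ℂ, ‖κ‖ = 1 ∧ ∃ h ≥ 0, 2 * h ^ 2 ≤ ‖a‖ ^ 2 ∧
    ∀ ζ : ℂ, ζ.re = h → (κ * ζ).re = a.re ∨ (κ * ζ).im = a.im := by
  have hsq : ‖a‖ ^ 2 = a.re ^ 2 + a.im ^ 2 := by rw [Complex.sq_norm, normSq_apply]; ring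
  rcases le_total |a.re| |a.im| with hle | hle
  · have hre : 2 * |a.re| ^ 2 ≤ ‖a‖ ^ 2 := by
      rw [hsq, sq_abs]; linarith [sq_le_sq.mpr hle]
    rcases abs_choice a.re with h | h
    · exact ⟨1, by simp, |a.re|, abs_nonneg _, hre, fun ζ hζ => .inl (by simp [hζ, h])⟩
    · exact ⟨-1, by simp, |a.re|, abs_nonneg _, hre, fun ζ hζ => .inl (by simp [hζ, h])⟩
  · have him : 2 * |a.im| ^ 2 ≤ ‖a‖ ^ 2 := by
      rw [hsq, sq_abs]; linarith [sq_le_sq.mpr hle]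
    rcases abs_choice a.im with h | h
    · exact ⟨I, by simp, |a.im|, abs_nonneg _, him, fun ζ hζ => .inr (by simp [hζ, h])⟩
    · exact ⟨-I, by simp, |a.im|, abs_nonneg _, him, fun ζ hζ => .inr (by simp [hζ, h])⟩

theorem norm_pow_four_le_of_norm_le_on_cross {E : Type*} [NormedAddCommGroup E] [NormedSpace ℂ E]
    {g : ℂ → E} {w q : ℂ} {A ε : ℝ} (hqw : q ≠ w) (hg : DifferentiableOn ℂ g (ball w (dist w q)))
    (hA : ∀ z ∈ ball w (dist w q), ‖g z‖ ≤ A)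
    (hε : ∀ z ∈ ball w (dist w q), z.re = q.re ∨ z.im = q.im → ‖g z‖ ≤ ε) :
    ‖g w‖ ^ 4 ≤ ε * A ^ 3 := by
  obtain ⟨κ, hκ, h, hh, hhδ, hcross⟩ := exists_rotation_to_cross (q - w)
  obtain ⟨ℓ, hℓ, hℓg⟩ := exists_dual_vector'' ℂ (g w)
  have hδ : ‖q - w‖ = dist w q := by rw [dist_comm, dist_eq_norm]
  have hmaps : MapsTo (fun ζ => w + κ * ζ) (ball 0 (dist w q)) (ball w (dist w q)) := by
    intro ζ hζ
    simpa [hκ] using hζ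
  have hℓ_le (x : E) : ‖ℓ x‖ ≤ ‖x‖ := ℓ.le_of_opNorm_le_of_le hℓ le_rfl |>.trans_eq (one_mul _)
  have hchord := norm_pow_four_le_of_norm_le_on_chord (g := fun ζ => ℓ (g (w + κ * ζ)))
    (dist_pos.mpr hqw.symm) hh (hδ ▸ hhδ)
    (ℓ.differentiable.comp_differentiableOn (hg.comp (by fun_prop) hmaps))
    (fun ζ hζ => (hℓ_le _).trans (hA _ (hmaps hζ)))
    (fun ζ hζ hre => (hℓ_le _).trans (hε _ (hmaps hζ) ?_))
  · simpa [hℓg] using hchord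
  · rcases hcross ζ hre with h | h
    · exact .inl (by rw [add_re, h, sub_re]; ring)
    · exact .inr (by rw [add_im, h, sub_im]; ring)

end TwoConstants

section CrossLipschitz

lemma exists_nearest_of_isClosed {X : Type*} [PseudoMetricSpace X] [ProperSpace X] {Z : Set X}
    (hZ : IsClosed Z) (hne : Z.Nonempty) (w : X) :
    ∃ q ∈ Z, (∀ p ∈ Z, dist w q ≤ dist w p) ∧ ∀ z ∈ ball w (dist w q), z ∉ Z := by
  obtain ⟨q, hq, hqw⟩ := hZ.exists_infDist_eq_dist hne w
  have hmin : ∀ p ∈ Z, dist w q ≤ dist w p := fun p hp => hqw ▸ infDist_le_dist_of_mem hp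
  exact ⟨q, hq, hmin, fun z hz hzZ => (hmin z hzZ).not_gt (mem_ball'.mp hz)⟩

variable {E : Type*} [NormedAddCommGroup E]

/-- The Lipschitz condition with constant `M` at `p`, tested only on points at distance less than
`r` from `p` that lie on the horizontal or on the vertical line through `p`. -/
def CrossLipschitzAt (f : ℂ → E) (M : ℝ≥0) (r : ℝ) (p : ℂ) : Prop :=
  ∀ z ∈ ball p r, z.re = p.re ∨ z.im = p.im → ‖f z - f p‖ ≤ M * dist z p

lemma CrossLipschitzAt.mono {f : ℂ → E} {M M' : ℝ≥0} {r r' : ℝ} {p : ℂ}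
    (h : CrossLipschitzAt f M r p) (hM : M ≤ M') (hr : r' ≤ r) : CrossLipschitzAt f M' r' p :=
  fun z hz hcross => (h z (ball_subset_ball hr hz) hcross).trans (by gcongr)

lemma CrossLipschitzAt.norm_sub_le {f : ℂ → E} {M : ℝ≥0} {r : ℝ} {p q : ℂ}
    (hp : CrossLipschitzAt f M r p) (hq : CrossLipschitzAt f M r q) (hqp : dist q p < r) :
    ‖f q - f p‖ ≤ 2 * M * dist q p := by
  have hcp : dist (⟨q.re, p.im⟩ : ℂ) p ≤ dist q p := dist_corner_right_le q p
  have hcq : dist (⟨q.re, p.im⟩ : ℂ) q ≤ dist q p := dist_corner_left_le q p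
  calc ‖f q - f p‖ ≤ ‖f q - f ⟨q.re, p.im⟩‖ + ‖f ⟨q.re, p.im⟩ - f p‖ :=
        norm_sub_le_norm_sub_add_norm_sub _ _ _
    _ ≤ M * dist (⟨q.re, p.im⟩ : ℂ) q + M * dist (⟨q.re, p.im⟩ : ℂ) p := by
        gcongr
        · rw [norm_sub_rev]
          exact hq _ (hcq.trans_lt hqp) (.inl rfl)
        · exact hp _ (hcp.trans_lt hqp) (.inr rfl)
    _ ≤ M * dist q p + M * dist q p := by gcongr
    _ = 2 * M * dist q p := by ring

lemma CrossLipschitzAt.of_tendsto {f : ℂ → E} {M : ℝ≥0} {r : ℝ} {p : ℂ} {u : ℕ → ℂ}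
    (hu : Tendsto u atTop (𝓝 p)) (h : ∀ n, CrossLipschitzAt f M r (u n)) (hr : 0 < r)
    (hre : ∀ z ∈ ball p r, ContinuousAt (fun x : ℝ => f ⟨x, z.im⟩) z.re)
    (him : ∀ z ∈ ball p r, ContinuousAt (fun y : ℝ => f ⟨z.re, y⟩) z.im) :
    CrossLipschitzAt f M r p := by
  have hure : Tendsto (fun n => (u n).re) atTop (𝓝 p.re) :=
    (continuous_re.tendsto p).comp hu
  have huim : Tendsto (fun n => (u n).im) atTop (𝓝 p.im) :=
    (continuous_im.tendsto p).comp hu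
  have hdist : Tendsto (fun n => M * dist p (u n)) atTop (𝓝 0) := by
    simpa using ((tendsto_const_nhds (x := p)).dist hu).const_mul (M : ℝ)
  have hcorner : Tendsto (fun n => f ⟨p.re, (u n).im⟩) atTop (𝓝 (f p)) :=
    (him p (mem_ball_self hr)).tendsto.comp huim
  have hfu : Tendsto (fun n => f (u n)) atTop (𝓝 (f p)) := by
    have hsub : Tendsto (fun n => f ⟨p.re, (u n).im⟩ - f (u n)) atTop (𝓝 0) := by
      refine squeeze_zero_norm' ?_ hdist
      filter_upwards [hu.eventually (ball_mem_nhds p hr)] with n hn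
      have hd := dist_corner_right_le p (u n)
      exact (h n _ (hd.trans_lt (mem_ball'.mp hn)) (.inr rfl)).trans (by gcongr)
    simpa using hcorner.sub hsub
  intro z hz hcross
  obtain ⟨v, hv, hvcross, hfv⟩ : ∃ v : ℕ → ℂ, Tendsto v atTop (𝓝 z) ∧
      (∀ n, (v n).re = (u n).re ∨ (v n).im = (u n).im) ∧
      Tendsto (fun n => f (v n)) atTop (𝓝 (f z)) := by
    rcases hcross with hz' | hz'
    · refine ⟨fun n => ⟨(u n).re, z.im⟩, ?_, fun n => .inl rfl, ?_⟩
      · exact (equivRealProdCLM.symm.continuous.tendsto (z.re, z.im)).comp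
          ((hz' ▸ hure).prodMk_nhds tendsto_const_nhds)
      · exact (hre z hz).tendsto.comp (hz' ▸ hure)
    · refine ⟨fun n => ⟨z.re, (u n).im⟩, ?_, fun n => .inr rfl, ?_⟩
      · exact (equivRealProdCLM.symm.continuous.tendsto (z.re, z.im)).comp
          (tendsto_const_nhds.prodMk_nhds (hz' ▸ huim))
      · exact (him z hz).tendsto.comp (hz' ▸ huim)
  refine le_of_tendsto_of_tendsto (hfv.sub hfu).norm ((hv.dist hu).const_mul (M : ℝ)) ?_
  filter_upwards [(hv.dist hu).eventually_lt_const (mem_ball.mp hz)] with n hn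
  exact h n _ hn (hvcross n)

lemma crossLipschitzAt_of_forall_abs_lt {f : ℂ → E} {M : ℝ≥0} {r : ℝ} {p : ℂ}
    (hre : ∀ t : ℝ, |t| < r → ‖f (p + t • (1 : ℂ)) - f p‖ ≤ M * |t|)
    (him : ∀ t : ℝ, |t| < r → ‖f (p + t • I) - f p‖ ≤ M * |t|) : CrossLipschitzAt f M r p := by
  intro z hz hcross
  rw [mem_ball] at hz
  rcases hcross with hz' | hz'
  · have hzp : p + (z.im - p.im) • I = z := by apply Complex.ext <;> simp [hz']
    have hdist : dist z p = |z.im - p.im| := Complex.dist_of_re_eq hz'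
    simpa only [hzp, hdist] using him (z.im - p.im) (hdist ▸ hz)
  · have hzp : p + (z.re - p.re) • (1 : ℂ) = z := by apply Complex.ext <;> simp [hz']
    have hdist : dist z p = |z.re - p.re| := Complex.dist_of_im_eq hz'
    simpa only [hzp, hdist] using hre (z.re - p.re) (hdist ▸ hz)

variable [NormedSpace ℂ E]

/-- On the ball of radius `4 r` about the point `p₀` of the closed set `Z`, the function `f` is
bounded by `C`, holomorphic off `Z`, and cross-Lipschitz with constant `M` at the points of `Z`. -/
structure IsCrossLipschitzAlong (f : ℂ → E) (Z : Set ℂ) (p₀ : ℂ) (r C : ℝ) (M : ℝ≥0) : Prop where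
  isClosed : IsClosed Z
  mem : p₀ ∈ Z
  pos : 0 < r
  norm_le : ∀ z ∈ ball p₀ (4 * r), ‖f z‖ ≤ C
  differentiableAt : ∀ z ∈ ball p₀ (4 * r), z ∉ Z → DifferentiableAt ℂ f z
  crossLipschitzAt : ∀ p ∈ Z, p ∈ ball p₀ (4 * r) → CrossLipschitzAt f M (4 * r) p

variable {f : ℂ → E} {Z : Set ℂ} {p₀ : ℂ} {r C : ℝ} {M : ℝ≥0}

namespace IsCrossLipschitzAlong

variable (h : IsCrossLipschitzAlong f Z p₀ r C M)
include h

lemma norm_sub_nearest_le {B s : ℝ} (hBM : 256 * M ≤ B) (hsr : s ≤ r) {w q : ℂ}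
    (hw : w ∈ ball p₀ (r + s)) (hq : q ∈ Z) (hqs : dist w q ≤ s)
    (hdisj : ∀ z ∈ ball w (dist w q), z ∉ Z)
    (hB : ∀ z ∈ ball p₀ (r + 2 * s), dist z q ≤ 2 * s → ‖f z - f q‖ ≤ B * (2 * s)) :
    ‖f w - f q‖ ≤ B * s / 2 := by
  have hs : 0 ≤ s := dist_nonneg.trans hqs
  have hB₀ : 0 ≤ B := le_trans (by positivity) hBM
  rcases eq_or_ne q w with rfl | hqw
  · simpa using by positivity
  have hqr : q ∈ ball p₀ (4 * r) := by
    rw [mem_ball] at hw ⊢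
    linarith [dist_triangle_left q p₀ w]
  have hball : ∀ z ∈ ball w (dist w q), z ∈ ball p₀ (r + 2 * s) ∧ dist z q ≤ 2 * s := by
    intro z hz
    rw [mem_ball] at *
    constructor <;> linarith [dist_triangle z w p₀, dist_triangle z w q]
  have hsub : ball p₀ (r + 2 * s) ⊆ ball p₀ (4 * r) := ball_subset_ball (by linarith [h.pos])
  have hpow : ‖f w - f q‖ ^ 4 ≤ (M * (2 * s)) * (B * (2 * s)) ^ 3 := by
    refine norm_pow_four_le_of_norm_le_on_cross (g := fun z => f z - f q) hqw
      (fun z hz => ((h.differentiableAt z (hsub (hball z hz).1) (hdisj z hz)).sub_const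
        (f q)).differentiableWithinAt)
      (fun z hz => hB z (hball z hz).1 (hball z hz).2) fun z hz hcross => ?_
    refine (h.crossLipschitzAt q hq hqr z ?_ hcross).trans (by gcongr; exact (hball z hz).2)
    exact (hball z hz).2.trans_lt (by linarith [h.pos])
  refine le_of_pow_le_pow_left₀ four_ne_zero (by positivity) (hpow.trans ?_)
  calc (M * (2 * s)) * (B * (2 * s)) ^ 3 = 256 * M * (B ^ 3 * s ^ 4 / 16) := by ring
    _ ≤ B * (B ^ 3 * s ^ 4 / 16) := by gcongr
    _ = (B * s / 2) ^ 4 := by ring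

-- Halving the scale: the bound at scale `2 s` and the cross bound interpolate to the one at `s`.
lemma norm_sub_le_of_norm_sub_le_two_mul {B s : ℝ} (hBM : 256 * M ≤ B) (hsr : s ≤ r)
    (hB : ∀ w ∈ ball p₀ (r + 2 * s), ∀ p ∈ Z, dist w p ≤ 2 * s → ‖f w - f p‖ ≤ B * (2 * s))
    {w p : ℂ} (hw : w ∈ ball p₀ (r + s)) (hp : p ∈ Z) (hwp : dist w p ≤ s) :
    ‖f w - f p‖ ≤ B * s := by
  obtain ⟨q, hq, hmin, hdisj⟩ := exists_nearest_of_isClosed h.isClosed ⟨p₀, h.mem⟩ w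
  have hwq : dist w q ≤ s := (hmin p hp).trans hwp
  have hqp : dist q p ≤ 2 * s := by linarith [dist_triangle_left q p w]
  have hball {x : ℂ} (hx : dist w x ≤ s) : x ∈ ball p₀ (4 * r) := by
    rw [mem_ball] at hw ⊢
    linarith [dist_triangle_left x p₀ w, h.pos]
  have hnear := h.norm_sub_nearest_le hBM hsr hw hq hwq hdisj fun z hz => hB z hz q hq
  have hZ : ‖f q - f p‖ ≤ 2 * M * (2 * s) :=
    ((h.crossLipschitzAt p hp (hball hwp)).norm_sub_le (h.crossLipschitzAt q hq (hball hwq))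
      (by linarith [h.pos])).trans (by gcongr)
  have hMs : 256 * M * s ≤ B * s := by gcongr; exact dist_nonneg.trans hwp
  have hMs₀ : 0 ≤ M * s := mul_nonneg M.coe_nonneg (dist_nonneg.trans hwp)
  linarith [norm_sub_le_norm_sub_add_norm_sub (f w) (f q) (f p)]

lemma norm_sub_le_dyadic {B : ℝ} (hBC : 2 * C ≤ B * r) (hBM : 256 * M ≤ B) (n : ℕ) :
    ∀ w ∈ ball p₀ (r + r * (1 / 2) ^ n), ∀ p ∈ Z, dist w p ≤ r * (1 / 2) ^ n →
      ‖f w - f p‖ ≤ B * (r * (1 / 2) ^ n) := by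
  induction n with
  | zero =>
    simp only [pow_zero, mul_one]
    intro w hw p _ hwp
    rw [mem_ball] at hw
    have hwC := h.norm_le w (by rw [mem_ball]; linarith [h.pos])
    have hpC := h.norm_le p (by rw [mem_ball]; linarith [h.pos, dist_triangle_left p p₀ w])
    linarith [norm_sub_le (f w) (f p)]
  | succ n ih =>
    have hscale : r * (1 / 2) ^ n = 2 * (r * (1 / 2) ^ (n + 1)) := by ring
    rw [hscale] at ih
    have hle : r * (1 / 2) ^ (n + 1) ≤ r :=
      mul_le_of_le_one_right h.pos.le (pow_le_one₀ (by norm_num) (by norm_num))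
    exact fun w hw p hp hwp => h.norm_sub_le_of_norm_sub_le_two_mul hBM hle ih hw hp hwp

lemma norm_sub_le_mul_dist {B : ℝ} (hBC : 2 * C ≤ B * r) (hBM : 256 * M ≤ B) {w p : ℂ}
    (hw : w ∈ ball p₀ r) (hp : p ∈ Z) (hwp : dist w p ≤ r) : ‖f w - f p‖ ≤ 2 * B * dist w p := by
  rcases eq_or_ne w p with rfl | hne
  · simp
  have hB : 0 ≤ B := le_trans (by positivity) hBM
  obtain ⟨n, hlt, hle⟩ := exists_nat_pow_near_of_lt_one (y := (1 / 2 : ℝ))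
    (div_pos (dist_pos.mpr hne) h.pos) ((div_le_one h.pos).mpr hwp) (by norm_num) (by norm_num)
  rw [lt_div_iff₀ h.pos] at hlt
  rw [div_le_iff₀ h.pos] at hle
  have hpos : 0 < r * (1 / 2) ^ n := mul_pos h.pos (by positivity)
  calc ‖f w - f p‖ ≤ B * (r * (1 / 2) ^ n) := h.norm_sub_le_dyadic hBC hBM n w
        (ball_subset_ball (by linarith) hw) p hp (by linarith)
    _ = 2 * B * ((1 / 2) ^ (n + 1) * r) := by ring
    _ ≤ 2 * B * dist w p := by gcongr

lemma norm_deriv_le {B : ℝ} (hBC : 2 * C ≤ B * r) (hBM : 256 * M ≤ B) {w : ℂ}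
    (hw : w ∈ ball p₀ (r / 2)) (hwZ : w ∉ Z) : ‖deriv f w‖ ≤ 6 * B := by
  obtain ⟨q, hq, hmin, hdisj⟩ := exists_nearest_of_isClosed h.isClosed ⟨p₀, h.mem⟩ w
  have hd : 0 < dist w q := dist_pos.mpr fun hwq => hwZ (hwq ▸ hq)
  have hdr : dist w q < r / 2 := (hmin p₀ h.mem).trans_lt hw
  have hB : 0 ≤ B := le_trans (by positivity) hBM
  rw [mem_ball] at hw
  have hball : ∀ z, dist z w ≤ dist w q / 2 → z ∈ ball p₀ r := by
    intro z hz
    rw [mem_ball]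
    linarith [dist_triangle z w p₀]
  have hsphere : ∀ z ∈ sphere w (dist w q / 2), ‖f z - f q‖ ≤ 3 * B * dist w q := by
    intro z hz
    rw [mem_sphere] at hz
    have hzq : dist z q ≤ 3 / 2 * dist w q := by linarith [dist_triangle z w q]
    refine (h.norm_sub_le_mul_dist hBC hBM (hball z hz.le) hq (by linarith)).trans ?_
    nlinarith
  have hdiff : DifferentiableOn ℂ f (ball p₀ (4 * r) \ Z) := fun z hz =>
    (h.differentiableAt z hz.1 hz.2).differentiableWithinAt
  have hsub : closedBall w (dist w q / 2) ⊆ ball p₀ (4 * r) \ Z := fun z hz =>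
    ⟨ball_subset_ball (by linarith [h.pos]) (hball z hz),
      hdisj z (closedBall_subset_ball (half_lt_self hd) hz)⟩
  have hcauchy := norm_deriv_le_of_forall_mem_sphere_norm_le (half_pos hd)
    ((hdiff.diffContOnCl_ball hsub).sub_const (f q)) hsphere
  rw [deriv_sub_const] at hcauchy
  refine hcauchy.trans_eq ?_
  field_simp
  ring

lemma norm_le_of_hasCauchyRiemannDerivAt {B : ℝ} (hBC : 2 * C ≤ B * r) (hBM : 256 * M ≤ B) {w : ℂ}
    {f' : E} (hw : w ∈ ball p₀ (r / 2)) (hf : HasCauchyRiemannDerivAt f f' w) : ‖f'‖ ≤ 6 * B := by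
  have hw' : w ∈ ball p₀ (4 * r) := ball_subset_ball (by linarith [h.pos]) hw
  by_cases hwZ : w ∈ Z
  · have hB : 0 ≤ B := le_trans (by positivity) hBM
    have hlip : ∀ᶠ z in 𝓝 w, ‖f z - f w‖ ≤ 2 * B * ‖z - w‖ := by
      filter_upwards [ball_mem_nhds w (half_pos h.pos)] with z hz
      rw [mem_ball] at hw hz
      rw [← dist_eq_norm z w]
      exact h.norm_sub_le_mul_dist hBC hBM (mem_ball.mpr (by linarith [dist_triangle z w p₀])) hwZ
        (by linarith [h.pos])
    have hf' := hf.1.le_of_lip' (by positivity) hlip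
    rw [norm_one, mul_one] at hf'
    linarith
  · have hderiv := hasCauchyRiemannDerivAt_of_hasDerivAt (h.differentiableAt w hw' hwZ).hasDerivAt
    rw [hf.1.unique hderiv.1]
    exact h.norm_deriv_le hBC hBM hw hwZ

theorem differentiableOn [CompleteSpace E] {g : ℂ → E}
    (hg : ∀ z ∈ ball p₀ (r / 2), HasCauchyRiemannDerivAt f (g z) z) :
    DifferentiableOn ℂ f (ball p₀ (r / 2)) := by
  have hBC : 2 * C ≤ max (2 * C / r) (256 * M) * r :=
    (div_le_iff₀ h.pos).mp (le_max_left _ _)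
  exact differentiableOn_of_hasCauchyRiemannDerivAt_of_norm_le isOpen_ball hg fun z hz =>
    h.norm_le_of_hasCauchyRiemannDerivAt hBC (le_max_right _ _) hz (hg z hz)

end IsCrossLipschitzAlong

end CrossLipschitz

section Tolstov

variable {E : Type*} [NormedAddCommGroup E] [NormedSpace ℂ E] {f g : ℂ → E} {U K : Set ℂ}

lemma exists_crossLipschitzAt_of_hasCauchyRiemannDerivAt {f : ℂ → E} {f' : E} {p : ℂ}
    (h : HasCauchyRiemannDerivAt f f' p) : ∃ M : ℝ≥0, ∃ r > 0, CrossLipschitzAt f M r p := by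
  obtain ⟨M₁, h₁⟩ := exists_norm_add_smul_sub_le_of_hasLineDerivAt h.1
  obtain ⟨M₂, h₂⟩ := exists_norm_add_smul_sub_le_of_hasLineDerivAt h.2
  obtain ⟨r, hr, hball⟩ := Metric.eventually_nhds_iff.mp (h₁.and h₂)
  simp only [Real.dist_eq, sub_zero] at hball
  refine ⟨max M₁ M₂, r, hr, crossLipschitzAt_of_forall_abs_lt ?_ ?_⟩
  · exact fun t ht => (hball ht).1.trans (by gcongr; exact le_max_left _ _)
  · exact fun t ht => (hball ht).2.trans (by gcongr; exact le_max_right _ _)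

lemma isClosed_setOf_crossLipschitzAt {M : ℝ≥0} {r : ℝ} (hr : 0 < r)
    (hf : ∀ z ∈ U, HasCauchyRiemannDerivAt f (g z) z) :
    IsClosed {p | ball p r ⊆ U ∧ CrossLipschitzAt f M r p} := by
  refine IsSeqClosed.isClosed fun u p hu hup => ?_
  have hball : ball p r ⊆ U := fun z hz => by
    obtain ⟨n, hn⟩ := ((tendsto_const_nhds (x := z)).dist hup |>.eventually_lt_const hz).exists
    exact (hu n).1 hn
  have hderiv {z : ℂ} (hz : z ∈ ball p r) :
      HasCauchyRiemannDerivAt f (g z) (z.re + z.im * I) := by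
    simpa only [re_add_im] using hf z (hball hz)
  refine ⟨hball, .of_tendsto hup (fun n => (hu n).2) hr (fun z hz => ?_) fun z hz => ?_⟩
  · simpa only [mk_eq_add_mul_I] using (hderiv hz).hasDerivAt_re.continuousAt
  · simpa only [mk_eq_add_mul_I] using (hderiv hz).hasDerivAt_im.continuousAt

lemma exists_crossLipschitzAt_on_portion (hU : IsOpen U) (hK : IsLocallyClosed K) (hKU : K ⊆ U)
    (hKne : K.Nonempty) (hf : ∀ z ∈ U, HasCauchyRiemannDerivAt f (g z) z) :
    ∃ p₀ ∈ K, ∃ M : ℝ≥0, ∃ r > 0, ∀ p ∈ K, p ∈ ball p₀ r → CrossLipschitzAt f M r p := by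
  have := hK.locallyCompactSpace
  have := hKne.to_subtype
  have hpos (n : ℕ) : 0 < 1 / (n + 1 : ℝ) := by positivity
  have hclosed (n : ℕ) : IsClosed {p : K | ball (p : ℂ) (1 / (n + 1 : ℝ)) ⊆ U ∧
      CrossLipschitzAt f n (1 / (n + 1 : ℝ)) p} :=
    (isClosed_setOf_crossLipschitzAt (hpos n) hf).preimage continuous_subtype_val
  have hcover : ⋃ n : ℕ, {p : K | ball (p : ℂ) (1 / (n + 1 : ℝ)) ⊆ U ∧
      CrossLipschitzAt f n (1 / (n + 1 : ℝ)) p} = univ := by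
    refine eq_univ_of_forall fun p => mem_iUnion.mpr ?_
    obtain ⟨M, r, hr, hM⟩ := exists_crossLipschitzAt_of_hasCauchyRiemannDerivAt (hf p (hKU p.2))
    obtain ⟨ε, hε, hεU⟩ := Metric.isOpen_iff.mp hU p (hKU p.2)
    obtain ⟨n, hn, hM'⟩ : ∃ n : ℕ, 1 / (n + 1 : ℝ) < min r ε ∧ M ≤ n := by
      obtain ⟨n, hn, hMn⟩ := ((tendsto_one_div_add_atTop_nhds_zero_nat.eventually_lt_const
        (lt_min hr hε)).and (eventually_ge_atTop ⌈M⌉₊)).exists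
      exact ⟨n, hn, Nat.ceil_le.mp hMn⟩
    exact ⟨n, (ball_subset_ball (hn.le.trans (min_le_right _ _))).trans hεU,
      hM.mono hM' (hn.le.trans (min_le_left _ _))⟩
  obtain ⟨n, p₀, hp₀⟩ := nonempty_interior_of_iUnion_of_closed hclosed hcover
  obtain ⟨ρ, hρ, hball⟩ := Metric.mem_nhds_iff.mp (mem_interior_iff_mem_nhds.mp hp₀)
  refine ⟨p₀, p₀.2, n, min ρ (1 / (n + 1)), lt_min hρ (hpos n), fun p hp hpp₀ => ?_⟩
  have hmem : (⟨p, hp⟩ : K) ∈ ball p₀ ρ := ball_subset_ball (min_le_left _ _) hpp₀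
  exact (hball hmem).2.mono le_rfl (min_le_right _ _)

theorem differentiableOn_of_hasCauchyRiemannDerivAt [CompleteSpace E] (hU : IsOpen U)
    (hb : ∀ z ∈ U, ∃ C, ∀ᶠ w in 𝓝 z, ‖f w‖ ≤ C)
    (hf : ∀ z ∈ U, HasCauchyRiemannDerivAt f (g z) z) : DifferentiableOn ℂ f U := by
  let Z : Set ℂ := {z | ¬AnalyticAt ℂ f z}
  have hZ : IsClosed Z := (isOpen_analyticAt ℂ f).isClosed_compl
  suffices hUZ : U ∩ Z = ∅ from fun z hz => by
    have ha : AnalyticAt ℂ f z := by_contra fun hza => hUZ.le ⟨hz, hza⟩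
    exact ha.differentiableAt.differentiableWithinAt
  by_contra hne
  obtain ⟨p₀, ⟨hp₀U, hp₀Z⟩, M, r, hr, hM⟩ := exists_crossLipschitzAt_on_portion hU
    (hU.isLocallyClosed.inter hZ.isLocallyClosed) inter_subset_left
    (nonempty_iff_ne_empty.mpr hne) hf
  obtain ⟨C, hC⟩ := hb p₀ hp₀U
  obtain ⟨ε, hε, hball⟩ := Metric.eventually_nhds_iff_ball.mp (hC.and (hU.mem_nhds hp₀U))
  have hr₄ : 4 * (min r ε / 4) = min r ε := by ring
  have hcross : IsCrossLipschitzAlong f Z p₀ (min r ε / 4) C M :=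
    { isClosed := hZ
      mem := hp₀Z
      pos := div_pos (lt_min hr hε) four_pos
      norm_le := fun z hz =>
        (hball z (ball_subset_ball (hr₄.trans_le (min_le_right _ _)) hz)).1
      differentiableAt := fun z _ hz => (not_not.mp hz).differentiableAt
      crossLipschitzAt := fun p hp hpp₀ => by
        rw [hr₄] at hpp₀ ⊢
        have hpU := (hball p (ball_subset_ball (min_le_right _ _) hpp₀)).2
        exact (hM p ⟨hpU, hp⟩ (ball_subset_ball (min_le_left _ _) hpp₀)).mono le_rfl
          (min_le_left _ _) }
  refine hp₀Z ((hcross.differentiableOn fun z hz => hf z ?_).analyticAt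
    (ball_mem_nhds p₀ (half_pos hcross.pos)))
  exact (hball z (ball_subset_ball (by linarith [min_le_right r ε]) hz)).2

end Tolstov

section Fibers

variable {V : Type*} [NormedAddCommGroup V] [NormedSpace ℝ V] {Ω : Set V}

lemma eq_of_isPreconnected_fiber {W E : Type*} [AddCommGroup W] [Module ℝ W]
    [NormedAddCommGroup E] [NormedSpace ℝ E] {L : V →ₗ[ℝ] W} {f : V → E} {w : W} (hΩ : IsOpen Ω)
    (hf : ∀ ζ ∈ Ω, ∀ v, L v = 0 → HasLineDerivAt ℝ f 0 ζ v)
    (hw : IsPreconnected {ζ ∈ Ω | L ζ = w}) {ζ₁ ζ₂ : V} (h₁ : ζ₁ ∈ Ω ∧ L ζ₁ = w)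
    (h₂ : ζ₂ ∈ Ω ∧ L ζ₂ = w) : f ζ₁ = f ζ₂ := by
  refine hw.induction₂ (fun x y => f x = f y) (fun ζ hζ => ?_)
    (fun _ _ _ _ _ _ => Eq.trans) (fun _ _ _ _ => Eq.symm) h₁ h₂
  obtain ⟨r, hr, hball⟩ := Metric.isOpen_iff.mp hΩ ζ hζ.1
  filter_upwards [self_mem_nhdsWithin, mem_nhdsWithin_of_mem_nhds (ball_mem_nhds ζ hr)]
    with ζ' hζ' hζ'r
  have hv : L (ζ' - ζ) = 0 := by rw [map_sub, hζ'.2, hζ.2, sub_self]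
  have hline := norm_add_smul_sub_le_of_hasLineDerivAt (convex_ball ζ r) (f := f) (f' := 0) (C := 0)
    (v := ζ' - ζ) (t := 1) (fun x hx => hf x (hball hx) _ hv) (by simp) (mem_ball_self hr)
    (by simpa using hζ'r)
  simpa [sub_eq_zero, eq_comm] using hline

variable {E : Type*} [NormedAddCommGroup E] [NormedSpace ℂ E]
  {L : V →ₗ[ℝ] ℂ} {f f' : V → E} {F : ℂ → E}

lemma hasCauchyRiemannDerivAt_of_comp {ζ : V} {g : E} (hL : Function.Surjective L)
    (hF : ∀ᶠ x in 𝓝 ζ, F (L x) = f x) (hf : ∀ v, HasLineDerivAt ℝ f (L v • g) ζ v) :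
    HasCauchyRiemannDerivAt F g (L ζ) := by
  have hline (v : V) : HasLineDerivAt ℝ F (L v • g) (L ζ) (L v) := by
    have hcont : Continuous fun t : ℝ => ζ + t • v := by fun_prop
    have hF₀ : ∀ᶠ t in 𝓝 (0 : ℝ), F (L (ζ + t • v)) = f (ζ + t • v) :=
      (hcont.tendsto' 0 ζ (by simp)).eventually hF
    refine HasDerivAt.congr_of_eventuallyEq (hf v) ?_
    filter_upwards [hF₀] with t ht
    simpa using ht
  obtain ⟨u, hu⟩ := hL 1
  obtain ⟨v, hv⟩ := hL I
  exact ⟨by simpa [hu] using hline u, by simpa [hv] using hline v⟩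

theorem exists_differentiableOn_comp_eq [CompleteSpace E] (hL : Function.Surjective L)
    (hΩ : IsOpen Ω) (hfib : ∀ w, IsPreconnected {ζ ∈ Ω | L ζ = w})
    (hb : ∀ ζ ∈ Ω, ∃ C, ∀ᶠ x in 𝓝 ζ, ‖f x‖ ≤ C)
    (hf : ∀ ζ ∈ Ω, ∀ v, HasLineDerivAt ℝ f (L v • f' ζ) ζ v) :
    ∃ F : ℂ → E, DifferentiableOn ℂ F (L '' Ω) ∧ ∀ ζ ∈ Ω, F (L ζ) = f ζ := by
  have hfactor : (fun ζ : Ω => f ζ).FactorsThrough fun ζ : Ω => L ζ := fun ζ₁ ζ₂ h =>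
    eq_of_isPreconnected_fiber hΩ (fun ζ hζ v hv => by simpa [hv] using hf ζ hζ v) (hfib (L ζ₂))
      ⟨ζ₁.2, h⟩ ⟨ζ₂.2, rfl⟩
  obtain ⟨F, hF⟩ : ∃ F : ℂ → E, ∀ ζ ∈ Ω, F (L ζ) = f ζ :=
    ⟨_, fun ζ hζ => hfactor.extend_apply 0 ⟨ζ, hζ⟩⟩
  have hopen : IsOpenMap L := L.isOpenMap_of_finiteDimensional hL
  refine ⟨F, ?_, hF⟩
  have hFnhds {ζ : V} (hζ : ζ ∈ Ω) : ∀ᶠ x in 𝓝 ζ, F (L x) = f x := by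
    filter_upwards [hΩ.mem_nhds hζ] using hF
  choose! g hg using fun w (hw : w ∈ L '' Ω) => show ∃ g, HasCauchyRiemannDerivAt F g w by
    obtain ⟨ζ, hζ, rfl⟩ := hw
    exact ⟨f' ζ, hasCauchyRiemannDerivAt_of_comp hL (hFnhds hζ) (hf ζ hζ)⟩
  refine differentiableOn_of_hasCauchyRiemannDerivAt (hopen _ hΩ) ?_ hg
  rintro _ ⟨ζ, hζ, rfl⟩
  obtain ⟨C, hC⟩ := hb ζ hζ
  refine ⟨C, mem_of_superset (hopen.image_mem_nhds (hC.and (hFnhds hζ))) ?_⟩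
  rintro _ ⟨x, ⟨hxC, hxF⟩, rfl⟩
  exact (congrArg norm hxF).trans_le hxC

end Fibers

section Gateaux

lemma hasLineDerivAt_of_tendsto_right {V W : Type*} [AddCommGroup V] [Module ℝ V]
    [NormedAddCommGroup W] [NormedSpace ℝ W] {f : V → W} {f' : W} {x v : V}
    (hpos : Tendsto (fun t : ℝ => t⁻¹ • (f (x + t • v) - f x)) (𝓝[>] 0) (𝓝 f'))
    (hneg : Tendsto (fun t : ℝ => t⁻¹ • (f (x + t • -v) - f x)) (𝓝[>] 0) (𝓝 (-f'))) :
    HasLineDerivAt ℝ f f' x v := by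
  rw [hasLineDerivAt_iff_tendsto_slope_zero, ← nhdsLT_sup_nhdsGT, tendsto_sup]
  refine ⟨?_, hpos⟩
  have hflip : Tendsto (fun t : ℝ => -t) (𝓝[<] 0) (𝓝[>] 0) := by
    simpa using tendsto_neg_nhdsLT (a := (0 : ℝ))
  simpa [Function.comp_def, inv_neg] using (hneg.comp hflip).neg

variable {A : Type*} [NormedCommRing A] [NormedAlgebra ℂ A] {E : Submodule ℝ A}

lemma GateauxDiffAt.hasLineDerivAt {Φ : E → A} {ζ : E} {g : A} (h : GateauxDiffAt Φ ζ g) (v : E) :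
    HasLineDerivAt ℝ Φ ((v : A) * g) ζ v :=
  hasLineDerivAt_of_tendsto_right (h v) (by simpa using h (-v))

lemma GateauxDiffAt.hasLineDerivAt_clm_comp {W : Type*} [NormedAddCommGroup W] [NormedSpace ℝ W]
    {Φ : E → A} {ζ : E} {g : A} (h : GateauxDiffAt Φ ζ g) (T : A →L[ℝ] W) (v : E) :
    HasLineDerivAt ℝ (fun x => T (Φ x)) (T (v * g)) ζ v :=
  T.hasFDerivAt.comp_hasDerivAt (0 : ℝ) (h.hasLineDerivAt v)

lemma IsLocBoundedOn.exists_eventually_norm_clm_le {W : Type*} [NormedAddCommGroup W]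
    [NormedSpace ℝ W] {Φ : E → A} {Ω : Set E} (h : IsLocBoundedOn Ω Φ) (hΩ : IsOpen Ω)
    (T : A →L[ℝ] W) {ζ : E} (hζ : ζ ∈ Ω) : ∃ C, ∀ᶠ x in 𝓝 ζ, ‖T (Φ x)‖ ≤ C := by
  obtain ⟨r, hr, C, hC⟩ := h ζ hζ
  refine ⟨‖T‖ * C, ?_⟩
  filter_upwards [hΩ.mem_nhds hζ, ball_mem_nhds ζ hr] with x hxΩ hxr
  exact T.le_opNorm_of_le (hC x hxΩ (mem_ball_iff_norm.mp hxr))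

lemma isPreconnected_of_forall_joinedIn {X : Type*} [TopologicalSpace X] {s : Set X}
    (h : ∀ x ∈ s, ∀ y ∈ s, JoinedIn s x y) : IsPreconnected s := by
  rcases s.eq_empty_or_nonempty with rfl | hs
  · exact isPreconnected_empty
  · exact (isPathConnected_iff.mpr ⟨hs, h⟩).isConnected.isPreconnected

lemma inter_add_image_setOf_map_eq_zero {V W G : Type*} [AddGroup V] [AddGroup W] [FunLike G V W]
    [AddMonoidHomClass G V W] (L : G) (s : Set V) (a : V) :
    s ∩ (a + ·) '' {m | L m = 0} = {x ∈ s | L x = L a} := by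
  ext x
  simp [neg_add_eq_zero, eq_comm (a := L a)]

theorem exists_holomorphic_factor_general {φ : A →ₐ[ℂ] ℂ} (hφ : Continuous φ)
    (hsurj : Function.Surjective fun x : E => φ (x : A)) {Ω : Set E} (hΩ : IsOpen Ω)
    (hslice : ∀ a : E, IsPreconnected (Ω ∩ ((fun m => a + m) '' {m : E | φ (m : A) = 0})))
    {Φ Φ' : E → A} (hlb : IsLocBoundedOn Ω Φ) (hG : ∀ ζ ∈ Ω, GateauxDiffAt Φ ζ (Φ' ζ)) :
    ∃ F : ℂ → ℂ, DifferentiableOn ℂ F ((fun ζ : E => φ (ζ : A)) '' Ω) ∧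
      ∀ ζ ∈ Ω, F (φ (ζ : A)) = φ (Φ ζ) := by
  let T : A →L[ℝ] ℂ := ⟨φ.toLinearMap.restrictScalars ℝ, hφ⟩
  let L : E →ₗ[ℝ] ℂ := T.toLinearMap ∘ₗ E.subtype
  have hfib (w : ℂ) : IsPreconnected {ζ ∈ Ω | L ζ = w} := by
    obtain ⟨a, rfl⟩ := hsurj w
    exact inter_add_image_setOf_map_eq_zero L Ω a ▸ hslice a
  refine exists_differentiableOn_comp_eq (L := L) (f' := fun ζ => φ (Φ' ζ)) hsurj hΩ hfib
    (fun ζ hζ => hlb.exists_eventually_norm_clm_le hΩ T hζ) fun ζ hζ v => ?_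
  have hTv : T (v * Φ' ζ) = L v • φ (Φ' ζ) := map_mul φ _ _
  exact hTv ▸ (hG ζ hζ).hasLineDerivAt_clm_comp T v

end Gateaux

/-- Under condition (C) and the slice path-connectedness assumption, for each
character `φ` there is a function `F : ℂ → ℂ`, holomorphic on `φ(Ω)`, with
`F(φ(ζ)) = φ(Φ(ζ))` on `Ω`, whenever `Φ` is locally bounded and Gâteaux
differentiable in `Ω`. -/
theorem exists_holomorphic_factor
    {A : Type*} [NormedCommRing A] [NormedAlgebra ℂ A] [FiniteDimensional ℂ A]
    {k : ℕ} (hk : 2 ≤ k) (e : Fin k → A) (he0 : e ⟨0, by omega⟩ = 1)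
    (hli : LinearIndependent ℝ e)
    (hC : CondC (Submodule.span ℝ (Set.range e)))
    (Ω : Set (Submodule.span ℝ (Set.range e))) (hΩ : IsOpen Ω)
    (hconn : IsConnected Ω)
    (hslice : ∀ (φ : A →ₐ[ℂ] ℂ) (a : Submodule.span ℝ (Set.range e)),
      ∀ ζ₁ ∈ Ω ∩ ((fun m => a + m) ''
        {m : Submodule.span ℝ (Set.range e) | φ (m : A) = 0}),
      ∀ ζ₂ ∈ Ω ∩ ((fun m => a + m) ''
        {m : Submodule.span ℝ (Set.range e) | φ (m : A) = 0}),
        JoinedIn (Ω ∩ ((fun m => a + m) ''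
          {m : Submodule.span ℝ (Set.range e) | φ (m : A) = 0})) ζ₁ ζ₂)
    (Φ Φ' : Submodule.span ℝ (Set.range e) → A)
    (hlb : IsLocBoundedOn Ω Φ)
    (hG : ∀ ζ ∈ Ω, GateauxDiffAt Φ ζ (Φ' ζ)) :
    ∀ φ : A →ₐ[ℂ] ℂ, ∃ F : ℂ → ℂ,
      DifferentiableOn ℂ F
        ((fun ζ : Submodule.span ℝ (Set.range e) => φ (ζ : A)) '' Ω) ∧
      ∀ ζ ∈ Ω, F (φ (ζ : A)) = φ (Φ ζ) :=
  fun φ => exists_holomorphic_factor_general φ.toLinearMap.continuous_of_finiteDimensional (hC φ)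
    hΩ (fun a => isPreconnected_of_forall_joinedIn (hslice φ a)) hlb hG
end
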